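/- arXiv:2302.00708 — 2 statements merged into one kernel-verified Lean document; each statement's English description precedes it below -/
import Mathlib

section
/- For every natural number n: for every B in {1, 3, 8, 9, 12, 15, 16, 17, 18}, b_38(361n + 19B − 15) ≡ p_17(19n + B) (mod 2); for every B in {2, 5, 6, 11, 13, 15, 16, 17, 18}, b_76(361n + 19B − 15) ≡ p_15(19n + B) (mod 2); for every B in {3, 4, 7, 10, 11, 12, 13, 15, 17}, b_152(361n + 19B − 15) ≡ p_11(19n + B) (mod 2); and for every B in {1, 3, 5, 6, 7, 8, 11, 14, 15}, b_304(361n + 19B − 15) ≡ p_3(19n + B) (mod 2). -/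
/-- The number of `m`-regular partitions of `n`, i.e. partitions of `n`
in which no part is divisible by `m`. -/
noncomputable def numRegularPartitions (m n : ℕ) : ℕ :=
  Nat.card {π : n.Partition // ∀ j ∈ π.parts, ¬ m ∣ j}

/-- The number of `t`-multipartitions of `n`, i.e. `t`-tuples of partitions
whose sizes sum to `n`. -/
noncomputable def numMultipartitions (t n : ℕ) : ℕ :=
  Nat.card {f : Fin t → Σ k : ℕ, k.Partition // (∑ i, (f i).1) = n}

section
open PowerSeries

/-- `F` is the Taylor series of `f` on the open unit disc. -/
def Ev (F : PowerSeries ℂ) (f : ℂ → ℂ) : Prop :=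
  ∀ q : ℂ, ‖q‖ < 1 → HasSum (fun n => coeff n F * q ^ n) (f q)

lemma hasSum_of_eq {f g : ℕ → ℂ} {a b : ℂ} (h : HasSum f a) (hfg : ∀ n, g n = f n) (hab : b = a) :
    HasSum g b := by
  subst hab
  rwa [show g = f from funext hfg]

namespace Ev

lemma congr {F : PowerSeries ℂ} {f g : ℂ → ℂ} (h : Ev F f) (hfg : ∀ q, ‖q‖ < 1 → f q = g q) :
    Ev F g := fun q hq => hfg q hq ▸ h q hq

lemma mul {F G : PowerSeries ℂ} {f g : ℂ → ℂ} (hF : Ev F f) (hG : Ev G g) :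
    Ev (F * G) (fun q => f q * g q) := by
  intro q hq
  have h1 := (hF q hq).summable.norm
  have h2 := (hG q hq).summable.norm
  have h3 := summable_norm_sum_mul_antidiagonal_of_summable_norm h1 h2
  have h4 := tsum_mul_tsum_eq_tsum_sum_antidiagonal_of_summable_norm h1 h2
  rw [(hF q hq).tsum_eq, (hG q hq).tsum_eq] at h4
  have h5 := h3.of_norm.hasSum
  rw [← h4] at h5
  refine hasSum_of_eq h5 (fun n => ?_) rfl
  rw [coeff_mul, Finset.sum_mul]
  refine Finset.sum_congr rfl fun p hp => ?_
  rw [← Finset.HasAntidiagonal.mem_antidiagonal.mp hp, pow_add]; ring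

lemma one : Ev 1 (fun _ => 1) := by
  intro q _
  convert hasSum_single (f := fun n => coeff n (1 : PowerSeries ℂ) * q ^ n) 0 ?_ using 1
  · simp
  · intro n hn; simp [coeff_one, hn]

lemma add {F G : PowerSeries ℂ} {f g : ℂ → ℂ} (hF : Ev F f) (hG : Ev G g) :
    Ev (F + G) (fun q => f q + g q) := by
  intro q hq
  convert (hF q hq).add (hG q hq) using 2 with n
  rw [map_add, add_mul]

lemma smul {F : PowerSeries ℂ} {f : ℂ → ℂ} (c : ℂ) (hF : Ev F f) :
    Ev (C c * F) (fun q => c * f q) := by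
  intro q hq
  refine hasSum_of_eq ((hF q hq).mul_left c) (fun n => ?_) rfl
  rw [coeff_C_mul]; ring

lemma pow {F : PowerSeries ℂ} {f : ℂ → ℂ} (hF : Ev F f) (k : ℕ) :
    Ev (F ^ k) (fun q => f q ^ k) := by
  induction k with
  | zero => simpa using one
  | succ k ih => simpa only [pow_succ] using ih.mul hF

lemma X_pow (k : ℕ) : Ev (X ^ k) (fun q => q ^ k) := by
  intro q _
  convert hasSum_single (f := fun n => coeff n (X ^ k : PowerSeries ℂ) * q ^ n) k ?_ using 1
  · simp [coeff_X_pow]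
  · intro n hn; simp [coeff_X_pow, hn]

lemma expand {F : PowerSeries ℂ} {f : ℂ → ℂ} (hF : Ev F f) (k : ℕ) (hk : k ≠ 0) :
    Ev (F.expand k hk) (fun q => f (q ^ k)) := by
  intro q hq
  have h := hF (q ^ k) (by rw [norm_pow]; exact pow_lt_one₀ (norm_nonneg _) hq hk)
  have hinj : Function.Injective (fun n : ℕ => k * n) := fun a b h => Nat.eq_of_mul_eq_mul_left (Nat.pos_of_ne_zero hk) h
  rw [← hinj.hasSum_iff]
  · convert h using 2 with n
    simp [Function.comp, coeff_expand_mul, pow_mul]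
  · intro n hn
    rw [coeff_expand_of_not_dvd, zero_mul]
    rintro ⟨m, rfl⟩
    exact hn ⟨m, rfl⟩

lemma hasFPowerSeries {F : PowerSeries ℂ} {f : ℂ → ℂ} (hF : Ev F f) :
    HasFPowerSeriesOnBall f (.ofScalars ℂ (fun n => coeff n F)) 0 1 := by
  refine ⟨?_, by norm_num, ?_⟩
  · refine ENNReal.le_of_forall_nnreal_lt fun r hr => ?_
    refine FormalMultilinearSeries.le_radius_of_summable _ ?_
    have h := (hF (r : ℝ) (by simpa using hr)).summable.norm
    refine h.congr fun n => ?_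
    simp
  · intro y hy
    have h := hF y (by
      rw [show (1 : ENNReal) = ENNReal.ofReal 1 by simp, Metric.eball_ofReal] at hy
      simpa using hy)
    refine hasSum_of_eq h (fun n => ?_) (by simp)
    simp [FormalMultilinearSeries.ofScalars_apply_eq, mul_comm]

lemma unique {F G : PowerSeries ℂ} {f : ℂ → ℂ} (hF : Ev F f) (hG : Ev G f) : F = G := by
  have := hF.hasFPowerSeries.hasFPowerSeriesAt.eq_formalMultilinearSeries
    hG.hasFPowerSeries.hasFPowerSeriesAt
  ext n
  simpa using congr_arg (FormalMultilinearSeries.coeff · n) this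

lemma differentiableOn {F : PowerSeries ℂ} {f : ℂ → ℂ} (hF : Ev F f) :
    DifferentiableOn ℂ f (Metric.ball 0 1) := by
  have := hF.hasFPowerSeries.differentiableOn
  rwa [show (1 : ENNReal) = ENNReal.ofReal 1 by simp, Metric.eball_ofReal] at this

lemma exists_of_differentiableOn {f : ℂ → ℂ} (hf : DifferentiableOn ℂ f (Metric.ball 0 1)) :
    ∃ F, Ev F f := by
  refine ⟨PowerSeries.mk fun n => (n.factorial : ℂ)⁻¹ * iteratedDeriv n f 0, fun q hq => ?_⟩
  have := Complex.hasSum_taylorSeries_on_ball (r := 1) hf (z := q) (by simpa using hq)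
  refine hasSum_of_eq this (fun n => ?_) rfl
  simp [mul_comm, mul_left_comm]

lemma inv {F G : PowerSeries ℂ} {f : ℂ → ℂ} (hF : Ev F f) (hf : ∀ q, ‖q‖ < 1 → f q ≠ 0)
    (hFG : F * G = 1) : Ev G (fun q => (f q)⁻¹) := by
  obtain ⟨G', hG'⟩ := exists_of_differentiableOn
    (hF.differentiableOn.inv fun q hq => hf q (by simpa using hq))
  have h1 : Ev (F * G') (fun _ => 1) :=
    (hF.mul hG').congr fun q hq => mul_inv_cancel₀ (hf q hq)
  have h2 : F * G' = 1 := h1.unique one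
  have : G' = G := by
    calc G' = G' * (F * G) := by rw [hFG, mul_one]
      _ = (F * G') * G := by ring
      _ = G := by rw [h2, one_mul]
  exact this ▸ hG'

end Ev
end

section
open PowerSeries

/-- Euler's product on the unit disc. -/
noncomputable def eulerP (q : ℂ) : ℂ := ∏' n : ℕ, (1 - q ^ (n + 1))

lemma norm_prod_one_sub_le {q : ℂ} (hq : ‖q‖ < 1) (k n : ℕ) :
    ‖∏ i ∈ Finset.range n, (1 - q ^ (k + i + 1))‖ ≤ Real.exp ((1 - ‖q‖)⁻¹) := by
  rw [norm_prod]
  calc ∏ i ∈ Finset.range n, ‖1 - q ^ (k + i + 1)‖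
      ≤ ∏ i ∈ Finset.range n, Real.exp (‖q‖ ^ i) := by
        refine Finset.prod_le_prod (fun _ _ => norm_nonneg _) fun i _ => ?_
        refine (norm_sub_le _ _).trans ?_
        rw [norm_one, norm_pow, add_comm]
        refine le_trans ?_ (Real.add_one_le_exp _)
        gcongr ?_ + 1
        exact pow_le_pow_of_le_one (norm_nonneg _) hq.le (by omega)
    _ = Real.exp (∑ i ∈ Finset.range n, ‖q‖ ^ i) := (Real.exp_sum _ _).symm
    _ ≤ _ := by
        rw [Real.exp_le_exp, ← tsum_geometric_of_lt_one (norm_nonneg _) hq]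
        exact (summable_geometric_of_lt_one (norm_nonneg _) hq).sum_le_tsum _
          (fun _ _ => by positivity)

lemma term_bound {q : ℂ} (hq : ‖q‖ < 1) (k n : ℕ) :
    ‖q ^ ((k + 1) * n) * ∏ i ∈ Finset.range (n + 1), (1 - q ^ (k + i + 1))‖
      ≤ Real.exp ((1 - ‖q‖)⁻¹) * ‖q‖ ^ n := by
  rw [norm_mul, norm_pow, mul_comm]
  gcongr ?_ * ?_
  · exact norm_prod_one_sub_le hq _ _
  · exact pow_le_pow_of_le_one (norm_nonneg _) hq.le (by nlinarith)

lemma hasSum_pent {q : ℂ} (hq : ‖q‖ < 1) :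
    Summable (fun n => coeff n (pentagonalSeries ℂ) * q ^ n) ∧
    HasSum (fun k : ℕ => (-1 : ℂ) ^ k * (q ^ pentagonal (-k) - q ^ pentagonal (k + 1)))
      (∑' n, coeff n (pentagonalSeries ℂ) * q ^ n) := by
  have hs : Summable (fun n => coeff n (pentagonalSeries ℂ) * q ^ n) := by
    refine Summable.of_norm_bounded (summable_geometric_of_lt_one (norm_nonneg _) hq) fun n => ?_
    rw [norm_mul, norm_pow]
    refine mul_le_of_le_one_left (by positivity) ?_
    by_cases h : n ∈ Set.range pentagonal
    · obtain ⟨k, rfl⟩ := h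
      rw [coeff_pentagonalSeries_pentagonal]
      rcases Int.units_eq_one_or (Int.negOnePow k) with h | h <;> simp [h]
    · simp [coeff_pentagonalSeries_eq_zero ℂ h]
  refine ⟨hs, ?_⟩
  have h1 := hs.hasSum
  rw [← pentagonal_injective.hasSum_iff fun n hn ↦ by
    simp [coeff_pentagonalSeries_eq_zero ℂ hn]] at h1
  rw [← neg_injective.hasSum_iff (fun x hx ↦ by absurd hx; use -x; simp)] at h1
  convert h1.nat_add_neg_add_one using 2 with k
  simp_rw [Function.comp_apply, neg_neg, coeff_pentagonalSeries_pentagonal, Int.negOnePow_add]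
  simp
  ring

lemma Ev_pent : Ev (pentagonalSeries ℂ) eulerP := by
  intro q hq
  obtain ⟨h1, h2⟩ := hasSum_pent hq
  have key : eulerP q = ∑' n, coeff n (pentagonalSeries ℂ) * q ^ n := by
    rw [← h2.tsum_eq]
    have hsb : Summable (fun n : ℕ => Real.exp ((1 - ‖q‖)⁻¹) * ‖q‖ ^ n) :=
      (summable_geometric_of_lt_one (norm_nonneg _) hq).mul_left _
    refine Pentagonal.tprod_one_sub_pow ?_ ?_ ?_ h2.summable ?_
    · exact tendsto_pow_atTop_nhds_zero_of_norm_lt_one hq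
    · exact fun k => Summable.of_norm_bounded hsb (term_bound hq k)
    · intro k
      simp_rw [sub_eq_add_neg]
      refine multipliable_one_add_of_summable (f := fun n : ℕ ↦ -q ^ (n + k + 1)) ?_
      simpa [add_assoc] using (summable_nat_add_iff (k + 1)).mpr
        (summable_geometric_of_lt_one (norm_nonneg q) hq)
    · refine squeeze_zero_norm (a := fun k => ‖q‖ ^ k * ∑' n : ℕ, Real.exp ((1 - ‖q‖)⁻¹) * ‖q‖ ^ n) (fun k => ?_) ?_
      · rw [norm_mul, norm_mul, norm_pow, norm_neg, norm_one, one_pow, one_mul, norm_pow]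
        gcongr ?_ * ?_
        · refine pow_le_pow_of_le_one (norm_nonneg _) hq.le ?_
          rw [Nat.le_div_iff_mul_le (by simp)]
          nlinarith
        · exact tsum_of_norm_bounded hsb.hasSum (term_bound hq k)
      · simpa using (tendsto_pow_atTop_nhds_zero_of_lt_one (norm_nonneg _) hq).mul_const _
  rw [key]
  exact h1.hasSum

lemma eulerP_ne_zero {q : ℂ} (hq : ‖q‖ < 1) : eulerP q ≠ 0 := by
  unfold eulerP
  simp_rw [sub_eq_add_neg]
  refine tprod_one_add_ne_zero_of_summable (f := fun n : ℕ ↦ -q ^ (n + 1)) ?_ ?_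
  · intro i h
    have : q ^ (i + 1) = 1 := by linear_combination -h
    have h2 := congr_arg norm this
    rw [norm_pow, norm_one] at h2
    have := pow_lt_one₀ (norm_nonneg _) hq (Nat.succ_ne_zero i)
    simp only [Nat.succ_eq_add_one] at this
    linarith
  · simpa [norm_neg] using (summable_nat_add_iff 1).mpr (summable_geometric_of_lt_one (norm_nonneg q) hq)

/-- The integral generating series of partitions (inverse of the pentagonal series). -/
noncomputable def RS (A : Type*) [CommRing A] : PowerSeries A :=
  PowerSeries.invOfUnit (pentagonalSeries A) 1

lemma constantCoeff_pent (A : Type*) [CommRing A] : constantCoeff (pentagonalSeries A) = 1 := by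
  have := coeff_pentagonalSeries_pentagonal (R := A) 0
  simpa [pentagonal_def] using this

lemma pent_mul_RS (A : Type*) [CommRing A] : pentagonalSeries A * RS A = 1 :=
  PowerSeries.mul_invOfUnit _ _ (by simp [constantCoeff_pent])

lemma map_pent {A B : Type*} [CommRing A] [CommRing B] (f : A →+* B) :
    PowerSeries.map f (pentagonalSeries A) = pentagonalSeries B := by
  ext n
  rw [coeff_map]
  by_cases h : n ∈ Set.range pentagonal
  · obtain ⟨k, rfl⟩ := h
    rw [coeff_pentagonalSeries_pentagonal, coeff_pentagonalSeries_pentagonal]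
    simp
  · simp [coeff_pentagonalSeries_eq_zero _ h]

lemma map_RS {A B : Type*} [CommRing A] [CommRing B] (f : A →+* B) :
    PowerSeries.map f (RS A) = RS B := by
  have h := congr_arg (PowerSeries.map f) (pent_mul_RS A)
  rw [map_mul, map_pent, map_one] at h
  calc PowerSeries.map f (RS A) = PowerSeries.map f (RS A) * (pentagonalSeries B * RS B) := by
        rw [pent_mul_RS, mul_one]
    _ = (pentagonalSeries B * PowerSeries.map f (RS A)) * RS B := by ring
    _ = _ := by rw [h, one_mul]

lemma Ev_RS : Ev (RS ℂ) (fun q => (eulerP q)⁻¹) :=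
  Ev_pent.inv (fun _ hq => eulerP_ne_zero hq) (pent_mul_RS ℂ)
end

section
open PowerSeries UpperHalfPlane ModularForm MatrixGroups

/-- `F` is the q-expansion of a level one modular form of weight `k`. -/
def IsMF (k : ℤ) (F : PowerSeries ℂ) : Prop :=
  ∃ f : ModularForm 𝒮ℒ k, qExpansion 1 f = F

namespace IsMF

lemma of_ev {k : ℤ} {F : PowerSeries ℂ} {g : ℂ → ℂ} (f : ModularForm 𝒮ℒ k) (hF : Ev F g)
    (h : ∀ z : ℍ, f z = g (Function.Periodic.qParam 1 z)) : IsMF k F := by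
  refine ⟨f, ?_⟩
  ext m
  refine (ModularFormClass.qExpansion_coeff_unique one_pos one_mem_strictPeriods_SL
    (c := fun m => coeff m F) (fun τ => ?_) m).symm
  rw [h]
  exact hF _ (by simpa using norm_qParam_lt_one 1 τ)

lemma sub {k : ℤ} {F G : PowerSeries ℂ} (hF : IsMF k F) (hG : IsMF k G) : IsMF k (F - G) := by
  obtain ⟨f, rfl⟩ := hF
  obtain ⟨g, rfl⟩ := hG
  exact ⟨f - g, ModularForm.qExpansion_sub one_pos one_mem_strictPeriods_SL f g⟩

lemma smul {k : ℤ} {F : PowerSeries ℂ} (c : ℂ) (hF : IsMF k F) : IsMF k (C c * F) := by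
  obtain ⟨f, rfl⟩ := hF
  refine ⟨c • f, (ModularForm.qExpansion_smul one_pos one_mem_strictPeriods_SL c f).trans ?_⟩
  rw [PowerSeries.smul_eq_C_mul]

lemma pow {k : ℤ} {F : PowerSeries ℂ} (hF : IsMF k F) (n : ℕ) : IsMF (n * k) (F ^ n) := by
  obtain ⟨f, rfl⟩ := hF
  exact ⟨f.pow n, ModularForm.qExpansion_pow one_pos one_mem_strictPeriods_SL f n⟩

lemma weight_zero {F : PowerSeries ℂ} (hF : IsMF 0 F) : ∃ c, F = C c := by
  obtain ⟨f, rfl⟩ := hF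
  obtain ⟨c, hc⟩ := ModularFormClass.levelOne_weight_zero_const f
  refine ⟨c, ?_⟩
  have : (f : ℍ → ℂ) = (ModularForm.const c : ModularForm 𝒮ℒ 0) := by
    rw [hc]; rfl
  obtain ⟨f', hf'⟩ : IsMF 0 (C c) := by
    refine of_ev (g := fun _ => c) (ModularForm.const c) ?_ (fun z => rfl)
    have := Ev.one.smul c
    simpa using this
  have h2 : (f : ℍ → ℂ) = f := rfl
  ext m
  refine (ModularFormClass.qExpansion_coeff_unique one_pos one_mem_strictPeriods_SL
    (c := fun m => coeff m (C c)) (fun τ => ?_) m).symm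
  rw [hc]
  have := (Ev.one.smul c) (Function.Periodic.qParam 1 τ) (by simpa using norm_qParam_lt_one 1 τ)
  simpa using this

lemma discriminant_qExp : qExpansion 1 ModularForm.discriminant = X * pentagonalSeries ℂ ^ 24 := by
  have hE : Ev (X * pentagonalSeries ℂ ^ 24) (fun q => q * eulerP q ^ 24) := by
    simpa using (Ev.X_pow 1).mul (Ev_pent.pow 24)
  rw [← CuspForm.coe_discriminant]
  ext m
  refine (ModularFormClass.qExpansion_coeff_unique one_pos one_mem_strictPeriods_SL
    (c := fun m => coeff m (X * pentagonalSeries ℂ ^ 24)) (fun τ => ?_) m).symm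
  have h := hE (Function.Periodic.qParam 1 τ) (by simpa using norm_qParam_lt_one 1 τ)
  rw [CuspForm.coe_discriminant, discriminant_eq_q_prod]
  refine hasSum_of_eq h (fun n => rfl) ?_
  show _ = Function.Periodic.qParam 1 (τ : ℂ) * _
  congr 1
  exact (multipliableLocallyUniformlyOn_eta.multipliable τ.2).tprod_pow _

lemma divDisc {k : ℤ} {F : PowerSeries ℂ} (hF : IsMF k F) (h0 : coeff 0 F = 0) :
    ∃ G, IsMF (k - 12) G ∧ F = X * pentagonalSeries ℂ ^ 24 * G := by
  obtain ⟨f, rfl⟩ := hF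
  refine ⟨_, ⟨CuspForm.discriminantEquiv (toCuspForm f h0), rfl⟩, ?_⟩
  rw [← discriminant_qExp]
  exact qExpansion_eq_qExpansion_discriminant_mul f h0

end IsMF

/-- Integral q-expansion of `E₄`. -/
noncomputable def E4Z : PowerSeries ℤ :=
  PowerSeries.mk fun m => if m = 0 then 1 else 240 * (ArithmeticFunction.sigma 3 m : ℤ)

lemma isMF_E4 : IsMF 4 (PowerSeries.map (Int.castRingHom ℂ) E4Z) := by
  refine ⟨ModularForm.E₄, ?_⟩
  ext m
  have := EisensteinSeries.E_qExpansion_coeff (k := 4) (by norm_num) (by decide) m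
  refine this.trans ?_
  have hb : bernoulli 4 = -1 / 30 := by
    rw [bernoulli_eq_bernoulli'_of_ne_one (by norm_num), bernoulli'_four]
  simp only [E4Z, coeff_map, coeff_mk, hb]
  split_ifs
  · simp
  · push_cast; norm_num

lemma E4Z_mod2 : PowerSeries.map (Int.castRingHom (ZMod 2)) E4Z = 1 := by
  ext m
  simp only [E4Z, coeff_map, coeff_mk, coeff_one]
  split_ifs
  · simp
  · rw [map_mul, show (Int.castRingHom (ZMod 2)) 240 = 0 by decide, zero_mul]

lemma map_int_injective : Function.Injective (PowerSeries.map (Int.castRingHom ℂ)) := by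
  intro F G h
  ext n
  have := congr_arg (coeff n) h
  simpa using this

lemma sturm_mod2 (N : ℕ) : ∀ F : PowerSeries ℤ,
    IsMF (12 * N) (PowerSeries.map (Int.castRingHom ℂ) F) →
    X ^ (N + 1) ∣ PowerSeries.map (Int.castRingHom (ZMod 2)) F →
    PowerSeries.map (Int.castRingHom (ZMod 2)) F = 0 := by
  induction N with
  | zero =>
    intro F hF hX
    obtain ⟨c, hc⟩ := IsMF.weight_zero (by simpa using hF)
    ext n
    rcases Nat.eq_zero_or_pos n with rfl | hn
    · rw [zero_add, pow_one, X_dvd_iff] at hX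
      rw [← coeff_zero_eq_constantCoeff_apply] at hX
      rw [hX, map_zero]
    · have h1 := congr_arg (coeff n) hc
      rw [coeff_map, coeff_C, if_neg hn.ne'] at h1
      have h2 : coeff n F = 0 := by simpa using h1
      simp [h2]
  | succ N ih =>
    intro F hF hX
    have h0 : coeff 0 (PowerSeries.map (Int.castRingHom (ZMod 2)) F) = 0 :=
      (X_pow_dvd_iff.mp hX) 0 (by omega)
    rw [coeff_map] at h0
    obtain ⟨c, hc⟩ : (2 : ℤ) ∣ coeff 0 F :=
      (ZMod.intCast_zmod_eq_zero_iff_dvd _ 2).mp (by simpa using h0)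
    set F1 : PowerSeries ℤ := F - C (2 * c) * E4Z ^ (3 * (N + 1)) with hF1
    have hm2 : PowerSeries.map (Int.castRingHom (ZMod 2)) F1
        = PowerSeries.map (Int.castRingHom (ZMod 2)) F := by
      rw [hF1, map_sub, map_mul, PowerSeries.map_C, map_mul,
        show (Int.castRingHom (ZMod 2)) 2 = 0 by decide, zero_mul, map_zero, zero_mul, sub_zero]
    have hF1MF : IsMF (12 * (N + 1 : ℕ)) (PowerSeries.map (Int.castRingHom ℂ) F1) := by
      rw [hF1, map_sub, map_mul, PowerSeries.map_C, map_pow]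
      refine hF.sub (IsMF.smul _ ?_)
      have := isMF_E4.pow (3 * (N + 1))
      convert this using 1
      push_cast; ring
    have hF10 : coeff 0 F1 = 0 := by
      rw [hF1, map_sub, coeff_C_mul, hc]
      simp [E4Z]
    obtain ⟨G, hG, hFG⟩ := hF1MF.divDisc (by simpa using hF10)
    obtain ⟨F2, hF2⟩ := X_dvd_iff.mpr (show constantCoeff F1 = 0 by simpa using hF10)
    have hPR : ∀ (A : Type) [CommRing A], pentagonalSeries A ^ 24 * RS A ^ 24 = 1 := by
      intro A _; rw [← mul_pow, pent_mul_RS, one_pow]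
    have hF1' : F1 = X * pentagonalSeries ℤ ^ 24 * (F2 * RS ℤ ^ 24) := by
      rw [hF2]; linear_combination (-X * F2) * hPR ℤ
    have hGm : G = PowerSeries.map (Int.castRingHom ℂ) (F2 * RS ℤ ^ 24) := by
      have h1 := congr_arg (PowerSeries.map (Int.castRingHom ℂ)) hF1'
      rw [map_mul, map_mul, map_pow, map_pent, PowerSeries.map_X, hFG] at h1
      refine mul_left_cancel₀ ?_ h1
      refine mul_ne_zero X_ne_zero (pow_ne_zero _ fun h => ?_)
      have := pent_mul_RS ℂ
      rw [h, zero_mul] at this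
      exact zero_ne_one this
    have h2 := congr_arg (PowerSeries.map (Int.castRingHom (ZMod 2))) hF1'
    rw [hm2, map_mul, map_mul, map_pow, map_pent, PowerSeries.map_X] at h2
    have h3 := ih (F2 * RS ℤ ^ 24) (by
      rw [← hGm]; convert hG using 1; push_cast; ring) (by
      obtain ⟨K, hK⟩ := hX
      refine ⟨K * RS (ZMod 2) ^ 24, ?_⟩
      rw [hK] at h2
      have h4 : X ^ (N + 1) * K = pentagonalSeries (ZMod 2) ^ 24 * PowerSeries.map (Int.castRingHom (ZMod 2)) (F2 * RS ℤ ^ 24) := by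
        refine mul_left_cancel₀ (X_ne_zero (R := ZMod 2)) ?_
        linear_combination h2
      linear_combination (-RS (ZMod 2) ^ 24) * h4 - (PowerSeries.map (Int.castRingHom (ZMod 2)) (F2 * RS ℤ ^ 24)) * hPR (ZMod 2))
    rw [h2, h3, mul_zero]
end

section
open UpperHalfPlane ModularForm MatrixGroups

/-- `η⁻⁸`. -/
noncomputable def GG (w : ℂ) : ℂ := (ModularForm.eta w ^ 8)⁻¹

/-- A primitive cube root of unity `exp (-2πi/3)`. -/
noncomputable def om : ℂ := Complex.exp (-(2 * Real.pi * Complex.I) / 3)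

lemma om_cube : om ^ 3 = 1 := by
  rw [om, ← Complex.exp_nat_mul]
  rw [show ((3 : ℕ) : ℂ) * (-(2 * Real.pi * Complex.I) / 3) = -(2 * Real.pi * Complex.I) by
    push_cast; ring, Complex.exp_neg, Complex.exp_two_pi_mul_I, inv_one]

lemma om_ne : om ≠ 0 := Complex.exp_ne_zero _

lemma eta_eq (w : ℂ) : ModularForm.eta w = Complex.exp (2 * Real.pi * Complex.I * w / 24) *
    eulerP (Complex.exp (2 * Real.pi * Complex.I * w)) := by
  simp only [ModularForm.eta, eulerP, ModularForm.eta_q, Function.Periodic.qParam]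
  simp

lemma GG_eq (w : ℂ) : GG w = Complex.exp (-(2 * Real.pi * Complex.I * w / 3)) *
    ((eulerP (Complex.exp (2 * Real.pi * Complex.I * w)))⁻¹) ^ 8 := by
  rw [GG, eta_eq, mul_pow, mul_inv, ← Complex.exp_nat_mul, ← Complex.exp_neg, inv_pow]
  congr 2
  push_cast; ring

lemma GG_add_one (w : ℂ) : GG (w + 1) = om * GG w := by
  rw [GG_eq, GG_eq, om, ← mul_assoc, ← Complex.exp_add]
  congr 2
  · ring
  · congr 2
    rw [mul_add, mul_one, Complex.exp_add, Complex.exp_two_pi_mul_I, mul_one]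

lemma GG_add_nat (w : ℂ) (n : ℕ) : GG (w + n) = om ^ n * GG w := by
  induction n with
  | zero => simp
  | succ n ih => rw [Nat.cast_succ, ← add_assoc, GG_add_one, ih, pow_succ]; ring

lemma GG_add_three_mul_nat (w : ℂ) (n : ℕ) : GG (w + 3 * n) = GG w := by
  have := GG_add_nat w (3 * n)
  rw [pow_mul, om_cube, one_pow, one_mul] at this
  rw [← this]; push_cast; rfl

lemma GG_add_three_mul_int (w : ℂ) (n : ℤ) : GG (w + 3 * n) = GG w := by
  obtain ⟨m, rfl | rfl⟩ := n.eq_nat_or_neg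
  · exact_mod_cast GG_add_three_mul_nat w m
  · rw [← GG_add_three_mul_nat (w + 3 * ((-(m : ℤ) : ℤ) : ℂ)) m]
    congr 1; push_cast; ring

lemma GG_inv (z : ℍ) : GG (-1 / (z : ℂ)) = ((z : ℂ) ^ 4)⁻¹ * GG z := by
  have hs : ∀ w : ℂ, w ≠ 0 → Complex.sqrt w ^ 8 = w ^ 4 := by
    intro w hw
    have h2 : Complex.sqrt w ^ 2 = w := by simp [Complex.sqrt]
    calc Complex.sqrt w ^ 8 = (Complex.sqrt w ^ 2) ^ 4 := by ring
      _ = _ := by rw [h2]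
  have he : ModularForm.eta (-1 / (z : ℂ)) =
      (Complex.sqrt Complex.I)⁻¹ * (Complex.sqrt z * ModularForm.eta z) :=
    eta_comp_eq_csqrt_I_inv z.2
  rw [GG, GG, he, mul_pow, mul_pow, inv_pow, hs _ Complex.I_ne_zero, hs _ z.ne_zero,
    Complex.I_pow_four, inv_one, one_mul, mul_inv]

/-- Exponent of the cubic multiplier. -/
def phi (γ : SL(2, ℤ)) : ZMod 3 :=
  ((γ 0 0 : ZMod 3) + (γ 1 1 : ZMod 3)) * (γ 1 0 : ZMod 3)
    - (γ 0 1 : ZMod 3) * (γ 1 1 : ZMod 3) * ((γ 1 0 : ZMod 3) ^ 2 - 1)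

/-- The transformation law. -/
def TL (γ : SL(2, ℤ)) : Prop :=
  ∀ z : ℍ, GG ((γ • z : ℍ) : ℂ) =
    ZMod.stdAddChar (-(phi γ)) * (((γ 1 0 : ℂ) * z + (γ 1 1 : ℂ)) ^ 4)⁻¹ * GG z

lemma det_mod3 (γ : SL(2, ℤ)) : (γ 0 0 : ZMod 3) * (γ 1 1 : ZMod 3)
    - (γ 0 1 : ZMod 3) * (γ 1 0 : ZMod 3) = 1 := by
  have h := γ.det_coe
  rw [Matrix.det_fin_two] at h
  have := congr_arg (Int.cast : ℤ → ZMod 3) h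
  simpa using this

lemma mul_T_entries (γ : SL(2, ℤ)) :
    (ModularGroup.T * γ) 0 0 = γ 0 0 + γ 1 0 ∧ (ModularGroup.T * γ) 0 1 = γ 0 1 + γ 1 1 ∧
    (ModularGroup.T * γ) 1 0 = γ 1 0 ∧ (ModularGroup.T * γ) 1 1 = γ 1 1 := by
  simp [Matrix.SpecialLinearGroup.coe_mul, ModularGroup.coe_T, Matrix.mul_apply, Fin.sum_univ_two]

lemma mul_S_entries (γ : SL(2, ℤ)) :
    (ModularGroup.S * γ) 0 0 = -γ 1 0 ∧ (ModularGroup.S * γ) 0 1 = -γ 1 1 ∧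
    (ModularGroup.S * γ) 1 0 = γ 0 0 ∧ (ModularGroup.S * γ) 1 1 = γ 0 1 := by
  simp [Matrix.SpecialLinearGroup.coe_mul, ModularGroup.coe_S, Matrix.mul_apply, Fin.sum_univ_two]

lemma phi_T (γ : SL(2, ℤ)) : phi (ModularGroup.T * γ) = phi γ + 1 := by
  obtain ⟨h1, h2, h3, h4⟩ := mul_T_entries γ
  have hd := det_mod3 γ
  simp only [phi, h1, h2, h3, h4]
  push_cast
  revert hd
  generalize ((γ 0 0 : ℤ) : ZMod 3) = a
  generalize ((γ 0 1 : ℤ) : ZMod 3) = b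
  generalize ((γ 1 0 : ℤ) : ZMod 3) = c
  generalize ((γ 1 1 : ℤ) : ZMod 3) = d
  revert a b c d
  decide

lemma phi_S (γ : SL(2, ℤ)) : phi (ModularGroup.S * γ) = phi γ := by
  obtain ⟨h1, h2, h3, h4⟩ := mul_S_entries γ
  have hd := det_mod3 γ
  simp only [phi, h1, h2, h3, h4]
  push_cast
  revert hd
  generalize ((γ 0 0 : ℤ) : ZMod 3) = a
  generalize ((γ 0 1 : ℤ) : ZMod 3) = b
  generalize ((γ 1 0 : ℤ) : ZMod 3) = c
  generalize ((γ 1 1 : ℤ) : ZMod 3) = d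
  revert a b c d
  decide

lemma coe_smul_SL (γ : SL(2, ℤ)) (z : ℍ) : ((γ • z : ℍ) : ℂ) =
    ((γ 0 0 : ℂ) * z + (γ 0 1 : ℂ)) / ((γ 1 0 : ℂ) * z + (γ 1 1 : ℂ)) := by
  rw [UpperHalfPlane.coe_specialLinearGroup_apply]
  simp

lemma jden_ne (γ : SL(2, ℤ)) (z : ℍ) : (γ 1 0 : ℂ) * z + (γ 1 1 : ℂ) ≠ 0 := by
  rw [← ModularGroup.denom_apply]
  exact UpperHalfPlane.denom_ne_zero _ z

lemma coe_T_smul (z : ℍ) : ((ModularGroup.T • z : ℍ) : ℂ) = z + 1 := by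
  rw [coe_smul_SL]; simp [ModularGroup.T]

lemma coe_S_smul (z : ℍ) : ((ModularGroup.S • z : ℍ) : ℂ) = -1 / z := by
  rw [coe_smul_SL]; simp [ModularGroup.S]

lemma stdAddChar_neg_one : ZMod.stdAddChar (-1 : ZMod 3) = om := by
  have := ZMod.stdAddChar_coe (N := 3) (-1)
  rw [show ((-1 : ℤ) : ZMod 3) = -1 by simp] at this
  rw [this, om]; congr 1; push_cast; ring

lemma TL_T (γ : SL(2, ℤ)) : TL γ ↔ TL (ModularGroup.T * γ) := by
  refine forall_congr' fun z => ?_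
  obtain ⟨-, -, h3, h4⟩ := mul_T_entries γ
  rw [h3, h4, phi_T, mul_smul, coe_T_smul, GG_add_one, neg_add, AddChar.map_add_eq_mul,
    stdAddChar_neg_one]
  constructor
  · intro h; rw [h]; ring
  · intro h
    refine mul_left_cancel₀ om_ne ?_
    rw [h]; ring

lemma TL_S (γ : SL(2, ℤ)) : TL γ ↔ TL (ModularGroup.S * γ) := by
  refine forall_congr' fun z => ?_
  obtain ⟨-, -, h3, h4⟩ := mul_S_entries γ
  rw [h3, h4, phi_S, mul_smul, coe_S_smul, GG_inv]
  have hz := (γ • z).ne_zero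
  have hj := jden_ne γ z
  have hm : (γ 0 0 : ℂ) * z + (γ 0 1 : ℂ) =
      ((γ • z : ℍ) : ℂ) * ((γ 1 0 : ℂ) * z + (γ 1 1 : ℂ)) := by
    rw [coe_smul_SL, div_mul_cancel₀ _ hj]
  rw [hm, mul_pow, mul_inv]
  have h4 : (((γ • z : ℍ) : ℂ) ^ 4)⁻¹ ≠ 0 := inv_ne_zero (pow_ne_zero _ hz)
  constructor
  · intro h; rw [h]; ring
  · intro h
    refine mul_left_cancel₀ h4 ?_
    rw [h]; ring

lemma TL_all (γ : SL(2, ℤ)) : TL γ := by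
  have key : ∀ g : SL(2, ℤ), ∀ γ, TL γ ↔ TL (g * γ) := by
    intro g
    have hg : g ∈ Subgroup.closure {ModularGroup.S, ModularGroup.T} := by
      rw [SpecialLinearGroup.SL2Z_generators]; trivial
    induction hg using Subgroup.closure_induction with
    | mem x hx =>
      rcases hx with rfl | rfl
      · exact TL_S
      · exact TL_T
    | one => simp
    | mul x y _ _ hx hy => intro γ; rw [mul_assoc, ← hx, ← hy]
    | inv x _ hx => intro γ; rw [hx (x⁻¹ * γ), mul_inv_cancel_left]
  have h1 : TL 1 := by
    intro z
    simp [phi]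
  simpa using (key γ 1).mp h1
end

section
open UpperHalfPlane ModularForm MatrixGroups

instance fact19 : Fact (Nat.Prime 19) := ⟨by norm_num⟩

/-- The summands. -/
noncomputable def gz (z : ℂ) (j : ZMod 19) : ℂ := GG ((z + 24 * (j.val : ℂ)) / 19)

lemma gz_int (z : ℂ) (j : ℤ) : gz z (j : ZMod 19) = GG ((z + 24 * (j : ℂ)) / 19) := by
  have h : ((((j : ZMod 19).val : ℤ)) : ZMod 19) = (j : ZMod 19) := by simp
  rw [ZMod.intCast_eq_intCast_iff_dvd_sub] at h
  obtain ⟨m, hm⟩ := h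
  have hj : (j : ℂ) = ((j : ZMod 19).val : ℂ) + 19 * m := by
    have := congr_arg (Int.cast : ℤ → ℂ) hm
    push_cast at this
    linear_combination this
  rw [gz, hj, ← GG_add_three_mul_int _ (8 * m)]
  congr 1; push_cast; ring

lemma exists_int_rep (j : ZMod 19) : ∃ i : ℤ, (i : ZMod 19) = j := ⟨j.val, by simp⟩

/-- The weight `-4` form with multiplier. -/
noncomputable def KK (z : ℂ) : ℂ := 19 ^ 4 * ∑ j : ZMod 19, gz z j + GG (19 * z)

lemma gz_T (z : ℂ) (j : ZMod 19) : gz (z + 1) j = om * gz z (j + 4) := by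
  obtain ⟨i, rfl⟩ := exists_int_rep j
  rw [show ((i : ZMod 19) + 4) = ((i + 4 : ℤ) : ZMod 19) by push_cast; rfl, gz_int, gz_int]
  have h := GG_add_nat ((z + 1 + 24 * (i : ℂ)) / 19) 5
  rw [show om ^ 5 = om ^ 2 by rw [show 5 = 3 + 2 from rfl, pow_add, om_cube, one_mul]] at h
  rw [show (z + 24 * ((i + 4 : ℤ) : ℂ)) / 19 = (z + 1 + 24 * (i : ℂ)) / 19 + (5 : ℕ) by
    push_cast; ring, h, ← mul_assoc, ← pow_succ', om_cube, one_mul]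

lemma sum_shift {J : Type*} [Fintype J] [AddCommGroup J] (f g : J → ℂ) (a : J) (c : ℂ)
    (h : ∀ j, f j = c * g (j + a)) : ∑ j, f j = c * ∑ j, g j := by
  rw [← Equiv.sum_comp (Equiv.addRight a) g, Finset.mul_sum]
  exact Finset.sum_congr rfl fun j _ => h j

lemma sum_invol {J : Type*} [Fintype J] [DecidableEq J] (f g : J → ℂ) (c : ℂ) (s : J → J)
    (hs : Function.Involutive s) (j0 : J) (h0 : s j0 = j0) (h : ∀ j, j ≠ j0 → f j = c * g (s j)) :
    ∑ j, f j = f j0 + c * (∑ j, g j - g j0) := by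
  have h1 : ∑ j, g j = ∑ j, g (s j) := (Equiv.sum_comp hs.toPerm g).symm
  rw [h1, ← Finset.add_sum_erase _ f (Finset.mem_univ j0),
    ← Finset.add_sum_erase _ (fun j => g (s j)) (Finset.mem_univ j0), h0,
    add_sub_cancel_left, Finset.mul_sum]
  congr 1
  exact Finset.sum_congr rfl fun j hj => h j (Finset.ne_of_mem_erase hj)

lemma KK_T (z : ℂ) : KK (z + 1) = om * KK z := by
  have h := GG_add_nat (19 * z) 19
  rw [show om ^ 19 = om by
    rw [show 19 = 3 * 6 + 1 from rfl, pow_add, pow_mul, om_cube, one_pow, one_mul, pow_one]] at h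
  have h2 : ∑ j : ZMod 19, gz (z + 1) j = om * ∑ j : ZMod 19, gz z j := by
    exact sum_shift _ _ 4 om (gz_T z)
  rw [KK, KK, h2, show 19 * (z + 1) = 19 * z + (19 : ℕ) by push_cast; ring, h]
  ring

/-- The matrices used for the inversion. -/
lemma exists_gamma (i i' : ℤ) (h : (i : ZMod 19) * (i' : ZMod 19) = 3) :
    ∃ γ : SL(2, ℤ), γ 0 0 = 24 * i ∧ 19 * γ 0 1 = - (1 + 576 * i * i') ∧
      γ 1 0 = 19 ∧ γ 1 1 = -24 * i' := by
  have hd : (19 : ℤ) ∣ - (1 + 576 * i * i') := by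
    have : ((-(1 + 576 * i * i') : ℤ) : ZMod 19) = 0 := by
      push_cast
      rw [mul_assoc, h]
      decide
    exact (ZMod.intCast_zmod_eq_zero_iff_dvd _ 19).mp this
  obtain ⟨b, hb⟩ := hd
  refine ⟨⟨!![24 * i, b; 19, -24 * i'], ?_⟩, ?_, ?_, ?_, ?_⟩
  · rw [Matrix.det_fin_two_of]; linear_combination hb
  · simp
  · simpa using hb.symm
  · simp
  · simp

/-- The point `(z + 24 j)/19`. -/
noncomputable def uu (z : ℍ) (j : ℤ) : ℍ :=
  ⟨((z : ℂ) + 24 * (j : ℂ)) / 19, by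
    have h : (((z : ℂ) + 24 * (j : ℂ)) / 19).im = z.im / 19 := by
      have : ((z : ℂ) + 24 * (j : ℂ)) / 19 = ((z : ℂ) + ((24 * j : ℝ) : ℂ)) / ((19 : ℝ) : ℂ) := by
        push_cast; rfl
      rw [this, Complex.div_ofReal_im, Complex.add_im, Complex.ofReal_im, add_zero]
      rfl
    rw [h]
    have := z.im_pos
    positivity⟩

/-- The point `19 z`. -/
noncomputable def vv (z : ℍ) : ℍ :=
  ⟨19 * (z : ℂ), by
    have h : (19 * (z : ℂ)).im = 19 * z.im := by
      have : (19 * (z : ℂ)) = ((19 : ℝ) : ℂ) * z := by push_cast; rfl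
      rw [this, Complex.im_ofReal_mul]
      rfl
    rw [h]
    have := z.im_pos
    positivity⟩

lemma gz_S (z : ℍ) (j : ZMod 19) (hj : j ≠ 0) :
    gz (-1 / (z : ℂ)) j = ((z : ℂ) ^ 4)⁻¹ * gz z (3 * j⁻¹) := by
  obtain ⟨i, hi⟩ := exists_int_rep j
  obtain ⟨i', hi'⟩ := exists_int_rep (3 * j⁻¹)
  have hii : (i : ZMod 19) * (i' : ZMod 19) = 3 := by
    rw [hi, hi']; field_simp
  obtain ⟨γ, h00, h01, h10, h11⟩ := exists_gamma i i' hii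
  have hT := TL_all γ (uu z i')
  have hphi : phi γ = 0 := by
    rw [phi, h00, h10, h11]
    push_cast
    rw [show (24 : ZMod 3) = 0 by decide, show (19 : ZMod 3) = 1 by decide]
    ring
  have hz := z.ne_zero
  have hden : (γ 1 0 : ℂ) * (uu z i' : ℍ) + (γ 1 1 : ℂ) = z := by
    rw [h10, h11]
    simp only [uu]
    push_cast; ring
  have h01' : 19 * (γ 0 1 : ℂ) = - (1 + 576 * i * i') := by exact_mod_cast h01
  have hc : ((γ • uu z i' : ℍ) : ℂ) = (-1 / (z : ℂ) + 24 * (i : ℂ)) / 19 := by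
    rw [coe_smul_SL, hden, h00]
    simp only [uu]
    push_cast
    field_simp
    linear_combination h01'
  rw [hphi, hden, hc, neg_zero, AddChar.map_zero_eq_one, one_mul] at hT
  rw [← hi', ← hi, gz_int, gz_int, hT]
  rfl

lemma inv3_inv (j : ZMod 19) : 3 * (3 * j⁻¹)⁻¹ = j := by
  rw [mul_inv, inv_inv, ← mul_assoc, mul_inv_cancel₀ (by decide), one_mul]

lemma KK_S (z : ℍ) : KK (-1 / (z : ℂ)) = ((z : ℂ) ^ 4)⁻¹ * KK z := by
  have hz := z.ne_zero
  have h0 : gz (-1 / (z : ℂ)) 0 = ((z : ℂ) ^ 4)⁻¹ * (19 ^ 4)⁻¹ * GG (19 * z) := by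
    have h := GG_inv (vv z)
    have hc : (vv z : ℂ) = 19 * z := rfl
    rw [hc] at h
    rw [gz]
    simp only [ZMod.val_zero, Nat.cast_zero, mul_zero, add_zero]
    rw [show -1 / (z : ℂ) / 19 = -1 / (19 * z) by field_simp, h, mul_pow, mul_inv]
    ring
  have h19 : GG (19 * (-1 / (z : ℂ))) = ((z : ℂ) ^ 4)⁻¹ * 19 ^ 4 * gz z 0 := by
    have h := GG_inv (uu z 0)
    have hc : (uu z 0 : ℂ) = z / 19 := by simp [uu]
    rw [hc] at h
    rw [gz]
    simp only [ZMod.val_zero, Nat.cast_zero, mul_zero, add_zero]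
    rw [show 19 * (-1 / (z : ℂ)) = -1 / (z / 19) by field_simp, h, div_pow, inv_div]
    ring
  have hsum : ∑ j : ZMod 19, gz (-1 / (z : ℂ)) j = gz (-1 / (z : ℂ)) 0
      + ((z : ℂ) ^ 4)⁻¹ * (∑ j : ZMod 19, gz z j - gz z 0) := by
    exact sum_invol _ _ _ (fun j => 3 * j⁻¹) inv3_inv 0 (by rw [inv_zero, mul_zero]) (gz_S z)
  rw [KK, KK, hsum, h0, h19]
  field_simp
  ring

/-- The weight 72 form. -/
noncomputable def HH (z : ℂ) : ℂ := (ModularForm.eta z ^ 8) ^ 19 * KK z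

lemma HH_T (z : ℂ) : HH (z + 1) = HH z := by
  have h := GG_add_one z
  simp only [GG] at h
  have h' : ModularForm.eta (z + 1) ^ 8 = om⁻¹ * ModularForm.eta z ^ 8 := by
    rw [← inv_inv (ModularForm.eta (z + 1) ^ 8), h, mul_inv, inv_inv]
  rw [HH, HH, KK_T, h', mul_pow]
  have : (om⁻¹) ^ 19 = om⁻¹ := by
    rw [show 19 = 3 * 6 + 1 from rfl, pow_add, pow_mul, inv_pow, om_cube]; simp
  rw [this]
  have := om_ne
  field_simp

lemma HH_S (z : ℍ) : HH (-1 / (z : ℂ)) = (z : ℂ) ^ 72 * HH z := by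
  have hz := z.ne_zero
  have h := GG_inv z
  simp only [GG] at h
  have h' : ModularForm.eta (-1 / (z : ℂ)) ^ 8 = (z : ℂ) ^ 4 * ModularForm.eta z ^ 8 := by
    rw [← inv_inv (ModularForm.eta (-1 / (z : ℂ)) ^ 8), h, mul_inv, inv_inv, inv_inv]
  rw [HH, HH, KK_S, h', mul_pow]
  field_simp

lemma GG_diff {w : ℂ} (hw : 0 < w.im) : DifferentiableAt ℂ GG w :=
  ((differentiableAt_eta_of_mem_upperHalfPlaneSet hw).pow 8).inv (pow_ne_zero _ (eta_ne_zero hw))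

lemma HH_diff {z : ℂ} (hz : 0 < z.im) : DifferentiableAt ℂ HH z := by
  have hgz : ∀ j, DifferentiableAt ℂ (fun z => gz z j) z := by
    intro j
    have h1 := GG_diff (uu ⟨z, hz⟩ j.val).2
    have h2 : DifferentiableAt ℂ (fun z : ℂ => (z + 24 * (j.val : ℂ)) / 19) z := by fun_prop
    refine DifferentiableAt.comp (f := fun z : ℂ => (z + 24 * (j.val : ℂ)) / 19) (g := GG) z ?_ h2
    simpa [uu] using h1
  have h19 : DifferentiableAt ℂ (fun z => GG (19 * z)) z := by
    have h1 := GG_diff (vv ⟨z, hz⟩).2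
    have h2 : DifferentiableAt ℂ (fun z : ℂ => 19 * z) z := by fun_prop
    exact DifferentiableAt.comp (f := fun z : ℂ => 19 * z) (g := GG) z h1 h2
  have he := differentiableAt_eta_of_mem_upperHalfPlaneSet hz
  refine ((he.pow 8).pow 19).mul ?_
  refine DifferentiableAt.add ?_ h19
  refine DifferentiableAt.const_mul ?_ _
  exact DifferentiableAt.fun_sum fun j _ => hgz j

lemma HH_slash_S : (fun z : ℍ => HH z) ∣[(72 : ℤ)] ModularGroup.S = (fun z : ℍ => HH z) := by
  ext z
  rw [SL_slash_apply, ModularGroup.denom_S]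
  show HH ((ModularGroup.S • z : ℍ) : ℂ) * _ = _
  rw [coe_S_smul, HH_S]
  have hz := z.ne_zero
  rw [zpow_neg, show (72 : ℤ) = ((72 : ℕ) : ℤ) from rfl, zpow_natCast]
  field_simp

lemma HH_slash_T : (fun z : ℍ => HH z) ∣[(72 : ℤ)] ModularGroup.T = (fun z : ℍ => HH z) := by
  ext z
  rw [SL_slash_apply, ModularGroup.denom_apply]
  show HH ((ModularGroup.T • z : ℍ) : ℂ) * _ = _
  rw [coe_T_smul, HH_T]
  simp [ModularGroup.T]

/-- `HH` as a modular form, given boundedness. -/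
noncomputable def HHform (hb : IsBoundedAtImInfty (fun z : ℍ => HH z)) : ModularForm 𝒮ℒ 72 where
  toFun := fun z : ℍ => HH z
  slash_action_eq' A hA := by
    obtain ⟨A, rfl⟩ := hA
    exact SlashInvariantForm.slash_action_generators_SL2Z HH_slash_S HH_slash_T A
  holo' := by
    rw [UpperHalfPlane.mdifferentiable_iff]
    refine DifferentiableOn.congr (f := HH)
      (fun z hz ↦ (HH_diff hz).differentiableWithinAt) fun z hz ↦ ?_
    simp [ofComplex_apply_of_im_pos hz]
  bdd_at_cusps' hc := by
    rw [Subgroup.IsArithmetic.isCusp_iff_isCusp_SL2Z] at hc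
    rw [OnePoint.isBoundedAt_iff_forall_SL2Z hc]
    intro γ _
    rw [SlashInvariantForm.slash_action_generators_SL2Z HH_slash_S HH_slash_T]
    exact hb
end

section
open PowerSeries UpperHalfPlane ModularForm MatrixGroups

/-- The section of the series `R⁸`. -/
noncomputable def WS (A : Type*) [CommRing A] : PowerSeries A :=
  PowerSeries.mk fun m => coeff (19 * m + 13) (RS A ^ 8)

/-- The function of `WS`. -/
noncomputable def wfun (q : ℂ) : ℂ := ∑' m, coeff m (WS ℂ) * q ^ m

lemma Ev_WS : Ev (WS ℂ) wfun := by
  intro q hq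
  refine Summable.hasSum ?_
  obtain ⟨r, hr⟩ := IsAlgClosed.exists_pow_nat_eq q (n := 19) (by norm_num)
  rcases eq_or_ne r 0 with rfl | hr0
  · have hq0 : q = 0 := by rw [← hr]; simp
    subst hq0
    refine summable_of_ne_finset_zero (s := {0}) fun n hn => ?_
    simp at hn
    simp [hn]
  have hr1 : ‖r‖ < 1 := by
    by_contra hcon
    have h1 : 1 ≤ ‖r‖ ^ 19 := one_le_pow₀ (not_lt.mp hcon)
    rw [← norm_pow, hr] at h1
    linarith
  have h := ((Ev_RS.pow 8) r hr1).summable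
  have hinj : Function.Injective (fun m : ℕ => 19 * m + 13) := fun a b h => by
    simp only at h; omega
  have h2 := (h.comp_injective hinj).mul_right ((r ^ 13)⁻¹)
  refine h2.congr fun m => ?_
  simp only [Function.comp, WS, coeff_mk]
  rw [← hr, ← pow_mul, pow_add]
  field_simp

/-- exponential shorthand -/
noncomputable def ee (w : ℂ) : ℂ := Complex.exp (2 * Real.pi * Complex.I * w)

lemma ee_add (a b : ℂ) : ee (a + b) = ee a * ee b := by
  rw [ee, ee, ee, ← Complex.exp_add]; congr 1; ring

lemma ee_pow (a : ℂ) (n : ℕ) : ee a ^ n = ee (n * a) := by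
  rw [ee, ee, ← Complex.exp_nat_mul]; congr 1; ring

lemma ee_norm_lt {w : ℂ} (hw : 0 < w.im) : ‖ee w‖ < 1 := by
  have := norm_exp_two_pi_I_lt_one ⟨w, hw⟩
  simpa [ee] using this

lemma ee_ne (w : ℂ) : ee w ≠ 0 := Complex.exp_ne_zero _

lemma ee_std (k : ℤ) : ee (k / 19) = ZMod.stdAddChar (k : ZMod 19) := by
  rw [ZMod.stdAddChar_coe, ee]; congr 1; push_cast; ring

lemma GG_hasSum {w : ℂ} (hw : 0 < w.im) :
    HasSum (fun n => ee (-w / 3) * (coeff n (RS ℂ ^ 8) * ee w ^ n)) (GG w) := by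
  have h := ((Ev_RS.pow 8) (ee w) (ee_norm_lt hw)).mul_left (ee (-w / 3))
  refine hasSum_of_eq h (fun n => rfl) ?_
  rw [GG_eq, ee, ee]
  congr 2; ring

lemma gz_hasSum (z : ℍ) (j : ZMod 19) :
    HasSum (fun n => ee (-z / 57) * (coeff n (RS ℂ ^ 8) * ee (z / 19) ^ n) *
      ZMod.stdAddChar (j * (24 * (n : ZMod 19) - 8))) (gz z j) := by
  have h := GG_hasSum (uu z j.val).2
  refine hasSum_of_eq h (fun n => ?_) ?_
  · simp only [uu, Int.cast_natCast]
    have h1 : ZMod.stdAddChar (j * (24 * (n : ZMod 19) - 8))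
        = ee (((j.val * (24 * n - 8) : ℤ) : ℂ) / 19) := by
      rw [ee_std]; congr 1; push_cast; simp
    rw [h1, ee_pow, ee_pow]
    have h2 : ee (-z / 57) * ee (n * (z / 19)) * ee (((j.val * (24 * n - 8) : ℤ) : ℂ) / 19)
        = ee (-((z + 24 * (j.val : ℂ)) / 19) / 3) * ee (n * ((z + 24 * (j.val : ℂ)) / 19)) := by
      rw [← ee_add, ← ee_add, ← ee_add]
      congr 1; push_cast; ring
    linear_combination (coeff n (RS ℂ ^ 8)) * h2
  · simp [gz, uu]

lemma sum_std (b : ZMod 19) : ∑ j : ZMod 19, ZMod.stdAddChar (j * b) = if b = 0 then (19 : ℂ) else 0 := by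
  rw [AddChar.sum_mulShift b (ZMod.isPrimitive_stdAddChar 19), ZMod.card]
  split_ifs <;> simp

lemma sum_gz (z : ℍ) : ∑ j : ZMod 19, gz z j = 19 * ee (2 * z / 3) * wfun (ee z) := by
  have h := hasSum_sum (s := Finset.univ) (fun j (_ : j ∈ Finset.univ) => gz_hasSum z j)
  have h' : HasSum (fun n => ee (-z / 57) * (coeff n (RS ℂ ^ 8) * ee (z / 19) ^ n) *
      (if (24 * (n : ZMod 19) - 8) = 0 then (19 : ℂ) else 0)) (∑ j : ZMod 19, gz z j) := by
    refine hasSum_of_eq h (fun n => ?_) rfl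
    rw [← Finset.mul_sum, sum_std]
  have hinj : Function.Injective (fun m : ℕ => 19 * m + 13) := fun a b h => by
    simp only at h; omega
  rw [← hinj.hasSum_iff] at h'
  · have hw := (Ev_WS (ee z) (ee_norm_lt z.2)).mul_left (19 * ee (2 * z / 3))
    refine HasSum.unique h' (hasSum_of_eq hw (fun m => ?_) rfl)
    have hm : (24 * ((19 * m + 13 : ℕ) : ZMod 19) - 8) = 0 := by
      push_cast
      rw [show (19 : ZMod 19) = 0 by decide, zero_mul, zero_add]
      decide
    simp only [Function.comp, hm, if_true, WS, coeff_mk]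
    rw [ee_pow, ee_pow]
    have h2 : ee (-z / 57) * ee ((19 * m + 13 : ℕ) * (z / 19)) = ee (2 * z / 3) * ee (m * z) := by
      rw [← ee_add, ← ee_add]
      congr 1; push_cast; ring
    linear_combination (19 * coeff (19 * m + 13) (RS ℂ ^ 8)) * h2
  · intro n hn
    rw [if_neg, mul_zero]
    intro h0
    apply hn
    have h13 : (n : ZMod 19) = ((13 : ℕ) : ZMod 19) := by
      revert h0
      generalize (n : ZMod 19) = x
      revert x
      decide
    rw [ZMod.natCast_eq_natCast_iff'] at h13
    exact ⟨n / 19, by simp only; omega⟩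

/-- integral q-expansion of `HH`. -/
noncomputable def FH (A : Type*) [CommRing A] : PowerSeries A :=
  pentagonalSeries A ^ 152 * (C (19 ^ 5) * (X ^ 7 * WS A) + (RS A ^ 8).expand 19 (by norm_num))

lemma Ev_FH : Ev (FH ℂ) (fun q => eulerP q ^ 152 * (19 ^ 5 * (q ^ 7 * wfun q) +
    ((eulerP (q ^ 19))⁻¹) ^ 8)) :=
  (Ev_pent.pow 152).mul ((((Ev.X_pow 7).mul Ev_WS).smul _).add ((Ev_RS.pow 8).expand 19 (by norm_num)))

lemma HH_eq (z : ℍ) : HH z = eulerP (ee z) ^ 152 * (19 ^ 5 * (ee z ^ 7 * wfun (ee z)) +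
    ((eulerP (ee z ^ 19))⁻¹) ^ 8) := by
  have h1 : ModularForm.eta z = ee (z / 24) * eulerP (ee z) := by
    rw [eta_eq, ee, ee]; congr 2; ring
  have h2 : GG (19 * z) = ee (-(19 * z / 3)) * ((eulerP (ee z ^ 19))⁻¹) ^ 8 := by
    rw [GG_eq, ee_pow, ee, ee]; congr 2; ring
  rw [HH, KK, sum_gz, h1, h2, mul_pow, mul_pow, ← pow_mul, ← pow_mul, ee_pow, ee_pow _ 7]
  have h3 : ee ((8 * 19 : ℕ) * (z / 24)) * ee (2 * z / 3) = ee ((7 : ℕ) * z) := by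
    rw [← ee_add]; congr 1; push_cast; ring
  have h4 : ee ((8 * 19 : ℕ) * (z / 24)) * ee (-(19 * z / 3)) = 1 := by
    rw [← ee_add, ← show ee 0 = 1 by simp [ee]]; congr 1; push_cast; ring
  generalize wfun (ee z) = w
  generalize ((eulerP (ee z ^ 19))⁻¹) ^ 8 = t
  generalize eulerP (ee z) = s
  linear_combination (s ^ 152 * 19 ^ 5 * w) * h3 + s ^ 152 * t * h4

lemma qParam_ee (z : ℂ) : Function.Periodic.qParam 1 z = ee z := by
  simp [Function.Periodic.qParam, ee]

lemma isMF_FH : IsMF 72 (FH ℂ) := by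
  have hb : IsBoundedAtImInfty (fun z : ℍ => HH z) := by
    refine isBoundedAtImInfty_of_hasSum_qExpansion (c := fun m => coeff m (FH ℂ)) one_pos
      (fun τ => ?_)
    rw [qParam_ee, HH_eq]
    exact Ev_FH (ee τ) (ee_norm_lt τ.2)
  refine IsMF.of_ev (HHform hb) Ev_FH fun z => ?_
  rw [qParam_ee]
  exact HH_eq z

lemma map_WS {A B : Type*} [CommRing A] [CommRing B] (f : A →+* B) :
    PowerSeries.map f (WS A) = WS B := by
  ext n
  simp only [WS, coeff_map, coeff_mk]
  rw [← coeff_map, map_pow, map_RS]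

lemma map_FH {A B : Type*} [CommRing A] [CommRing B] (f : A →+* B) :
    PowerSeries.map f (FH A) = FH B := by
  have hC : PowerSeries.map f (C (19 ^ 5)) = C (19 ^ 5) := by
    rw [PowerSeries.map_C, map_pow, map_ofNat]
  rw [FH, FH, map_mul, map_add, map_mul, hC, map_mul, PowerSeries.map_expand, map_WS,
    map_pow, map_pow, map_pow, map_pow, map_pent, map_RS, PowerSeries.map_X]
end

section
open PowerSeries

lemma sq_eq_expand (f : PowerSeries (ZMod 2)) : f ^ 2 = f.expand 2 two_ne_zero := by
  have h := MvPowerSeries.map_frobenius_expand (σ := Unit) (R := ZMod 2) 2 two_ne_zero (f := f)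
  rw [ZMod.frobenius_zmod] at h
  rw [← h]
  simp [PowerSeries.expand]

lemma expand_expand {A : Type*} [CommRing A] {a b c : ℕ} (ha : a ≠ 0) (hb : b ≠ 0) (hc : c ≠ 0)
    (h : c = a * b) (f : PowerSeries A) : (f.expand b hb).expand a ha = f.expand c hc := by
  subst h
  exact (PowerSeries.expand_mul a ha b hb f).symm

lemma pow_eq_expand (s : ℕ) (f : PowerSeries (ZMod 2)) :
    f ^ (2 ^ s) = f.expand (2 ^ s) (by positivity) := by
  induction s with
  | zero => simp
  | succ s ih =>
    have h : f ^ (2 ^ (s + 1)) = (f ^ (2 ^ s)) ^ 2 := by rw [← pow_mul, ← pow_succ]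
    rw [h, ih, sq_eq_expand]
    exact expand_expand _ _ _ (by ring) f

lemma pow8 (f : PowerSeries (ZMod 2)) : f ^ 8 = f.expand 8 (by norm_num) := pow_eq_expand 3 f

/-- The series with coefficients `p(19 N - 15)`. -/
noncomputable def SS : PowerSeries (ZMod 2) :=
  PowerSeries.mk fun N => if N = 0 then 0 else coeff (19 * N - 15) (RS (ZMod 2))

lemma X7WS : (X : PowerSeries (ZMod 2)) ^ 7 * WS (ZMod 2) = SS.expand 8 (by norm_num) := by
  ext M
  rw [coeff_X_pow_mul', PowerSeries.coeff_expand, WS]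
  simp only [coeff_mk, SS, pow8, PowerSeries.coeff_expand]
  split_ifs with h1 h2 h3 h4 h5 h6
  all_goals first | rfl | omega | skip
  have hh : (19 * (M - 7) + 13) / 8 = 19 * (M / 8) - 15 := by omega
  rw [hh]

lemma expand_inj {A : Type*} [CommRing A] {a : ℕ} (ha : a ≠ 0) {f g : PowerSeries A}
    (h : f.expand a ha = g.expand a ha) : f = g := by
  ext n
  have := congr_arg (coeff (a * n)) h
  rwa [PowerSeries.coeff_expand_mul, PowerSeries.coeff_expand_mul] at this

/-- Abbreviation for the series whose expansion is the modular form mod 2. -/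
noncomputable def GS : PowerSeries (ZMod 2) :=
  pentagonalSeries (ZMod 2) ^ 19 * (SS + (RS (ZMod 2)).expand 19 (by norm_num))

lemma FH2 : FH (ZMod 2) = GS.expand 8 (by norm_num) := by
  have h19 : ((19 : ZMod 2) ^ 5) = 1 := by decide
  rw [FH, GS, X7WS, h19, map_one, one_mul, map_mul, map_add, map_pow]
  simp only [← pow8, ← pow_mul]

lemma constantCoeff_RS : constantCoeff (RS (ZMod 2)) = 1 := by
  have h := congr_arg constantCoeff (pent_mul_RS (ZMod 2))
  rwa [map_mul, constantCoeff_pent, one_mul, map_one] at h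

lemma constantCoeff_GS : constantCoeff GS = 1 := by
  rw [GS, map_mul, map_pow, constantCoeff_pent, map_add, PowerSeries.constantCoeff_expand,
    constantCoeff_RS, ← coeff_zero_eq_constantCoeff_apply]
  simp [SS]

lemma FH2_eq_one : FH (ZMod 2) = 1 := by
  have h := sturm_mod2 6 (FH ℤ - E4Z ^ 18) ?_ ?_
  · rw [map_sub, map_FH, map_pow, E4Z_mod2, one_pow, sub_eq_zero] at h
    exact h
  · rw [map_sub, map_FH, map_pow]
    exact isMF_FH.sub (isMF_E4.pow 18)
  · rw [map_sub, map_FH, map_pow, E4Z_mod2, one_pow, X_pow_dvd_iff]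
    intro m hm
    rw [FH2, map_sub, PowerSeries.coeff_expand, coeff_one]
    by_cases hm0 : m = 0
    · subst hm0
      simp [constantCoeff_GS]
    · rw [if_neg (by omega), if_neg hm0, sub_zero]

lemma GS_eq_one : GS = 1 := by
  apply expand_inj (a := 8) (by norm_num)
  rw [← FH2, FH2_eq_one, map_one]

lemma SS_eq : SS = RS (ZMod 2) ^ 19 + (RS (ZMod 2)).expand 19 (by norm_num) := by
  have h := GS_eq_one
  rw [GS] at h
  have h1 : RS (ZMod 2) ^ 19 * pentagonalSeries (ZMod 2) ^ 19 = 1 := by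
    rw [← mul_pow, mul_comm, pent_mul_RS, one_pow]
  have h2 := congr_arg (RS (ZMod 2) ^ 19 * ·) h
  simp only [← mul_assoc, h1, one_mul, mul_one] at h2
  have h3 : ∀ f : PowerSeries (ZMod 2), f + f = 0 := fun f => by
    ext n
    rw [map_add, map_zero, CharTwo.add_self_eq_zero]
  rw [← h2, add_assoc, h3, add_zero]
end

section
open PowerSeries PowerSeries.WithPiTopology

lemma tendsto_expand (m : ℕ) (hm : m ≠ 0) :
    Continuous fun f : PowerSeries (ZMod 2) => f.expand m hm := by
  rw [continuous_iff_continuousAt]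
  intro f
  rw [ContinuousAt, tendsto_iff_coeff_tendsto]
  intro d
  simp only [PowerSeries.coeff_expand]
  split_ifs with h
  · exact (PowerSeries.WithPiTopology.continuous_coeff (ZMod 2) (d / m)).tendsto f
  · exact tendsto_const_nhds

lemma hasProd_expand (m : ℕ) (hm : m ≠ 0) :
    HasProd (fun i : ℕ => (1 - X ^ ((i + 1) * m) : PowerSeries (ZMod 2)))
      ((pentagonalSeries (ZMod 2)).expand m hm) := by
  have h := (hasProd_one_sub_X_pow (ZMod 2)).map (PowerSeries.expand (R := ZMod 2) m hm)
    (tendsto_expand m hm)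
  convert h using 2 with i
  simp only [Function.comp, map_sub, map_one, map_pow, PowerSeries.expand_X]
  rw [← pow_mul, mul_comm]

lemma aux_mul {m : ℕ} (hm : 0 < m) :
    (∏' i, if ¬m ∣ i + 1 then ∑' j, (X : PowerSeries (ZMod 2)) ^ ((i + 1) * j) else 1) *
      ∏' i, (1 - X ^ (i + 1)) = ∏' i, (1 - X ^ ((i + 1) * m)) := by
  rw [← (Nat.Partition.multipliable_powerSeriesMk_card_restricted (ZMod 2) (¬ m ∣ ·)).tprod_mul
    (multipliable_one_sub_X_pow _)]
  simp_rw [ite_not, ite_mul, pow_mul]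
  conv in fun b ↦ _ =>
    ext b
    rw [tsum_pow_mul_one_sub_of_constantCoeff_eq_zero (by simp)]
  refine tprod_eq_tprod_of_ne_one_bij (fun i ↦ (i.val + 1) * m - 1) ?_ ?_ ?_
  · intro a b h
    rw [tsub_left_inj (by nlinarith) (by nlinarith), mul_left_inj' (hm.ne.symm), add_left_inj] at h
    exact SetCoe.ext h
  · suffices ∀ (i : ℕ), m ∣ i + 1 → ∃ j ≠ 0, j * m - 1 = i by simpa
    intro i hi
    obtain ⟨j, hj⟩ := dvd_def.mp hi
    refine ⟨j, by grind, Nat.sub_eq_of_eq_add ?_⟩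
    rw [hj, mul_comm m j]
  · intro i
    have : (i + 1) * m - 1 + 1 = (i + 1) * m := by grind
    simp [this, pow_mul]

lemma numReg_eq (m n : ℕ) :
    numRegularPartitions m n = (Nat.Partition.restricted n (¬ m ∣ ·)).card := by
  rw [numRegularPartitions, Nat.card_eq_fintype_card, Fintype.card_subtype]
  rfl

lemma gf_reg {m : ℕ} (hm : m ≠ 0) :
    (PowerSeries.mk fun n => (numRegularPartitions m n : ZMod 2)) =
      RS (ZMod 2) * (pentagonalSeries (ZMod 2)).expand m hm := by
  have h := aux_mul (Nat.pos_of_ne_zero hm)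
  rw [← Nat.Partition.powerSeriesMk_card_restricted_eq_tprod (ZMod 2) (¬ m ∣ ·), (hasProd_expand m hm).tprod_eq,
    (hasProd_one_sub_X_pow (ZMod 2)).tprod_eq] at h
  simp only [numReg_eq]
  rw [← h, mul_comm, mul_assoc, pent_mul_RS, mul_one]

lemma gf_part : (PowerSeries.mk fun n => (Fintype.card (Nat.Partition n) : ZMod 2)) =
      RS (ZMod 2) := by
  have h1 := Nat.Partition.hasProd_powerSeriesMk_card_restricted (ZMod 2) (fun _ => True)
  have h2 := h1.mul (hasProd_one_sub_X_pow (ZMod 2))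
  simp only [if_true] at h2
  have h3 : ∀ i : ℕ, (∑' j : ℕ, (X : PowerSeries (ZMod 2)) ^ ((i + 1) * j)) * (1 - X ^ (i + 1))
      = 1 := fun i => by
    simp_rw [pow_mul]
    exact tsum_pow_mul_one_sub_of_constantCoeff_eq_zero (by simp)
  simp only [h3] at h2
  have h4 := h2.unique hasProd_one
  have h5 : ∀ n, (Nat.Partition.restricted n (fun _ => True)).card =
      Fintype.card (Nat.Partition n) := fun n => by
    simp [Nat.Partition.restricted]
  simp only [h5] at h4
  set f := PowerSeries.mk fun n => (Fintype.card (Nat.Partition n) : ZMod 2)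
  calc f = f * (pentagonalSeries (ZMod 2) * RS (ZMod 2)) := by rw [pent_mul_RS, mul_one]
    _ = _ := by rw [← mul_assoc, h4, one_mul]

/-- Multipartitions are grouped by their sequences of sizes. -/
def mpEquiv (t n : ℕ) :
    {f : Fin t → Σ k : ℕ, k.Partition // (∑ i, (f i).1) = n} ≃
      Σ l : {l // l ∈ Finset.finAntidiagonal t n}, ∀ i, (l.1 i).Partition where
  toFun f := ⟨⟨fun i => (f.1 i).1, Finset.mem_finAntidiagonal.2 f.2⟩, fun i => (f.1 i).2⟩
  invFun x := ⟨fun i => ⟨x.1.1 i, x.2 i⟩, Finset.mem_finAntidiagonal.1 x.1.2⟩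
  left_inv _ := rfl
  right_inv _ := rfl

lemma numMulti_eq (t n : ℕ) : numMultipartitions t n =
    ∑ l ∈ Finset.finAntidiagonal t n, ∏ i, Fintype.card (Nat.Partition (l i)) := by
  rw [numMultipartitions, Nat.card_congr (mpEquiv t n), Nat.card_eq_fintype_card,
    Fintype.card_sigma]
  simp only [Fintype.card_pi]
  exact Finset.sum_coe_sort (Finset.finAntidiagonal t n)
    (fun l => ∏ i, Fintype.card (Nat.Partition (l i)))

lemma coeff_RS_pow (t n : ℕ) : coeff n (RS (ZMod 2) ^ t) = (numMultipartitions t n : ZMod 2) := by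
  have h : RS (ZMod 2) ^ t = ∏ _i : Fin t, RS (ZMod 2) := by simp
  rw [h, coeff_prod, numMulti_eq, ← gf_part]
  push_cast
  refine Finset.sum_nbij' (fun l => (l : Fin t → ℕ)) (fun l => Finsupp.equivFunOnFinite.symm l)
    ?_ ?_ ?_ ?_ ?_
  · intro l hl
    rw [Finset.mem_finsuppAntidiag] at hl
    exact Finset.mem_finAntidiagonal.2 hl.1
  · intro l hl
    rw [Finset.mem_finsuppAntidiag]
    exact ⟨Finset.mem_finAntidiagonal.1 hl, by simp⟩
  · intro l _
    ext; rfl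
  · intro l _
    rfl
  · intro l _
    simp

/-- The shift of `SS`. -/
noncomputable def S1 : PowerSeries (ZMod 2) :=
  PowerSeries.mk fun N => coeff (19 * N + 4) (RS (ZMod 2))

lemma SS_eq_X : SS = X * S1 := by
  ext n
  cases n with
  | zero => simp [SS]
  | succ n =>
    rw [coeff_succ_X_mul, SS, S1, coeff_mk, coeff_mk, if_neg (by omega)]
    congr 2

lemma coeff_section (Q : PowerSeries (ZMod 2)) (M : ℕ) :
    coeff (19 * M + 4) (RS (ZMod 2) * Q.expand 19 (by norm_num)) = coeff M (S1 * Q) := by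
  rw [coeff_mul, coeff_mul]
  symm
  refine Finset.sum_of_injOn (fun x => (19 * x.1 + 4, 19 * x.2)) ?_ ?_ ?_ ?_
  · rintro ⟨a, b⟩ _ ⟨c, d⟩ _ h
    simp only [Prod.mk.injEq] at h ⊢
    omega
  · rintro ⟨a, b⟩ h
    simp only [Finset.mem_coe, Finset.HasAntidiagonal.mem_antidiagonal] at h ⊢
    omega
  · rintro ⟨i, j⟩ h1 h2
    simp only [Finset.HasAntidiagonal.mem_antidiagonal] at h1
    rw [PowerSeries.coeff_expand_of_not_dvd, mul_zero]
    rintro ⟨b, hb⟩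
    apply h2
    simp only at hb
    refine ⟨(M - b, b), ?_, ?_⟩
    · simp only [Finset.mem_coe, Finset.HasAntidiagonal.mem_antidiagonal]
      omega
    · simp only [Prod.mk.injEq]
      omega
  · rintro ⟨a, b⟩ _
    simp only [PowerSeries.coeff_expand_mul, S1, coeff_mk]

lemma vanish (s n B : ℕ) (hB : ∀ x : ZMod 19, 2 * (B : ZMod 19) ≠ 2 ^ s * (x * (3 * x - 1))) :
    coeff (19 * n + B) ((pentagonalSeries (ZMod 2)).expand (2 ^ s) (by positivity) *
      (RS (ZMod 2)).expand 19 (by norm_num)) = 0 := by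
  rw [coeff_mul]
  refine Finset.sum_eq_zero ?_
  rintro ⟨i, j⟩ h
  rw [Finset.HasAntidiagonal.mem_antidiagonal] at h
  simp only at h ⊢
  by_cases hj : 19 ∣ j
  swap
  · rw [PowerSeries.coeff_expand_of_not_dvd 19 _ (RS (ZMod 2)) hj, mul_zero]
  by_cases hi : 2 ^ s ∣ i
  swap
  · rw [PowerSeries.coeff_expand_of_not_dvd (2 ^ s) _ _ hi, zero_mul]
  obtain ⟨i, rfl⟩ := hi
  obtain ⟨j, rfl⟩ := hj
  rw [PowerSeries.coeff_expand_mul]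
  by_cases hp : i ∈ Set.range pentagonal
  swap
  · rw [coeff_pentagonalSeries_eq_zero _ hp, zero_mul]
  obtain ⟨k, rfl⟩ := hp
  exfalso
  apply hB (k : ZMod 19)
  have h1 := congr_arg (Nat.cast (R := ZMod 19)) h
  have h2 := congr_arg (Int.cast (R := ZMod 19)) (two_mul_natCast_pentagonal k)
  have h19 : (19 : ZMod 19) = 0 := by decide
  push_cast at h1 h2
  rw [h19] at h1
  linear_combination (-2) * h1 + 2 ^ s * h2

lemma main_congr (s t m n B : ℕ) (hst : 2 ^ s + t = 19) (hm : m = 19 * 2 ^ s) (hB0 : 1 ≤ B)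
    (hB : ∀ x : ZMod 19, 2 * (B : ZMod 19) ≠ 2 ^ s * (x * (3 * x - 1))) :
    numRegularPartitions m (361 * n + 19 * B - 15) ≡ numMultipartitions t (19 * n + B) [MOD 2] := by
  rw [← ZMod.natCast_eq_natCast_iff]
  have hm0 : m ≠ 0 := by subst hm; positivity
  have h2s : 2 ^ s ≠ 0 := by positivity
  obtain ⟨M, hM⟩ : ∃ M, 19 * n + B = M + 1 := ⟨19 * n + B - 1, by omega⟩
  have e1 : 361 * n + 19 * B - 15 = 19 * M + 4 := by omega
  have h1 := congr_arg (coeff (19 * M + 4)) (gf_reg hm0)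
  rw [coeff_mk, ← expand_expand (by norm_num) h2s hm0 hm, coeff_section] at h1
  rw [e1, h1, ← coeff_RS_pow, hM, ← coeff_succ_X_mul, ← mul_assoc, ← SS_eq_X, SS_eq, add_mul,
    map_add]
  have hv := vanish s n B hB
  rw [hM, mul_comm] at hv
  rw [hv, add_zero, ← pow_eq_expand, ← hst, pow_add, mul_right_comm, ← mul_pow,
    mul_comm (RS _), pent_mul_RS, one_pow, one_mul]
end

theorem stmt_5 (n : ℕ) :
    (∀ B ∈ ({1, 3, 8, 9, 12, 15, 16, 17, 18} : Finset ℕ),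
      numRegularPartitions 38 (361 * n + 19 * B - 15) ≡
        numMultipartitions 17 (19 * n + B) [MOD 2]) ∧
    (∀ B ∈ ({2, 5, 6, 11, 13, 15, 16, 17, 18} : Finset ℕ),
      numRegularPartitions 76 (361 * n + 19 * B - 15) ≡
        numMultipartitions 15 (19 * n + B) [MOD 2]) ∧
    (∀ B ∈ ({3, 4, 7, 10, 11, 12, 13, 15, 17} : Finset ℕ),
      numRegularPartitions 152 (361 * n + 19 * B - 15) ≡
        numMultipartitions 11 (19 * n + B) [MOD 2]) ∧
    (∀ B ∈ ({1, 3, 5, 6, 7, 8, 11, 14, 15} : Finset ℕ),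
      numRegularPartitions 304 (361 * n + 19 * B - 15) ≡
        numMultipartitions 3 (19 * n + B) [MOD 2]) := by
  refine ⟨fun B hB => main_congr 1 17 38 n B rfl rfl ?_ ?_,
    fun B hB => main_congr 2 15 76 n B rfl rfl ?_ ?_,
    fun B hB => main_congr 3 11 152 n B rfl rfl ?_ ?_,
    fun B hB => main_congr 4 3 304 n B rfl rfl ?_ ?_⟩
  all_goals
    revert B
    decide
end

section
/- For every natural number n: for every B in {3, 5, 8, 9, 12, 13, 15, 17, 18, 19, 20}, b_46(529n + 23B − 22) ≡ p_21(23n + B) (mod 2); for every B in {1, 3, 6, 7, 10, 11, 13, 15, 16, 17, 18}, b_92(529n + 23B − 22) ≡ p_19(23n + B) (mod 2); for every B in {2, 3, 6, 7, 9, 11, 12, 13, 14, 20, 22}, b_184(529n + 23B − 22) ≡ p_15(23n + B) (mod 2); and for every B in {1, 3, 4, 5, 6, 12, 14, 17, 18, 21, 22}, b_368(529n + 23B − 22) ≡ p_7(23n + B) (mod 2). -/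
namespace Reg23

/-- If an involution of a set switches a predicate, exactly half of the set satisfies it. -/
lemma ncard_half {α : Type*} (S : Set α) (hS : S.Finite) (f : α → α) (hf : ∀ x, f (f x) = x)
    (hfS : ∀ x ∈ S, f x ∈ S) (P : α → Prop) (hP : ∀ x ∈ S, (P (f x) ↔ ¬ P x)) :
    S.ncard = 2 * {x ∈ S | P x}.ncard := by
  have h1 : S = {x ∈ S | P x} ∪ {x ∈ S | ¬ P x} := by
    ext x; simp only [Set.mem_union, Set.mem_ofPred_eq]; tauto
  have h2 : {x ∈ S | ¬ P x} = f '' {x ∈ S | P x} := by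
    ext x
    simp only [Set.mem_ofPred_eq, Set.mem_image]
    constructor
    · rintro ⟨hx, hp⟩
      exact ⟨f x, ⟨hfS x hx, (hP x hx).2 hp⟩, hf x⟩
    · rintro ⟨y, ⟨hy, hp⟩, rfl⟩
      exact ⟨hfS y hy, fun h => (hP y hy).1 h hp⟩
  have h3 : Function.Injective f := fun a b h => by rw [← hf a, h, hf b]
  have h4 : S.ncard = {x ∈ S | P x}.ncard + {x ∈ S | ¬ P x}.ncard := by
    conv_lhs => rw [h1]
    apply Set.ncard_union_eq
    · rw [Set.disjoint_left]; rintro x ⟨_, h⟩ ⟨_, h'⟩; exact h' h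
    · exact hS.subset (fun _ h => h.1)
    · exact hS.subset (fun _ h => h.1)
  rw [h4, h2, Set.ncard_image_of_injective _ h3]; ring

lemma ncard_split {α : Type*} (S : Set α) (hS : S.Finite) (P : α → Prop) :
    S.ncard = {x ∈ S | P x}.ncard + {x ∈ S | ¬ P x}.ncard := by
  have h1 : S = {x ∈ S | P x} ∪ {x ∈ S | ¬ P x} := by
    ext x; simp only [Set.mem_union, Set.mem_ofPred_eq]; tauto
  conv_lhs => rw [h1]
  apply Set.ncard_union_eq
  · rw [Set.disjoint_left]; rintro x ⟨_, h⟩ ⟨_, h'⟩; exact h' h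
  · exact hS.subset (fun _ h => h.1)
  · exact hS.subset (fun _ h => h.1)

lemma ncard_bij {α β : Type*} (S : Set α) (T : Set β) (f : α → β) (g : β → α)
    (h1 : ∀ x ∈ S, f x ∈ T) (h2 : ∀ y ∈ T, g y ∈ S) (h3 : ∀ x ∈ S, g (f x) = x)
    (h4 : ∀ y ∈ T, f (g y) = y) : S.ncard = T.ncard := by
  apply Set.ncard_congr (fun x _ => f x) (fun x hx => h1 x hx)
  · intro a b ha hb h
    rw [← h3 a ha, ← h3 b hb, h]
  · intro y hy; exact ⟨g y, h2 y hy, h4 y hy⟩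

/-- Representations `k (x² + d y²) = e`. -/
def W (d k e : ℤ) : Set (ℤ × ℤ) := {p | k * (p.1 ^ 2 + d * p.2 ^ 2) = e}

lemma W_finite (d k e : ℤ) (hd : 0 < d) (hk : 0 < k) : (W d k e).Finite := by
  apply (Set.finite_Icc ((-e, -e) : ℤ × ℤ) (e, e)).subset
  rintro ⟨x, y⟩ h
  simp only [W, Set.mem_ofPred_eq] at h
  have hx : |x| ≤ x ^ 2 := by
    rw [← sq_abs]; nlinarith [abs_nonneg x, sq_nonneg (|x| - 1), Int.le_self_sq |x|]
  have hy : |y| ≤ y ^ 2 := by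
    rw [← sq_abs]; nlinarith [abs_nonneg y, Int.le_self_sq |y|]
  have h0 : x ^ 2 + d * y ^ 2 ≤ e := by nlinarith [sq_nonneg x, mul_nonneg hd.le (sq_nonneg y)]
  have h1 : y ^ 2 ≤ d * y ^ 2 := by nlinarith [sq_nonneg y]
  have hx' : |x| ≤ e := by nlinarith [sq_nonneg y]
  have hy' : |y| ≤ e := by nlinarith [sq_nonneg x]
  rw [abs_le] at hx' hy'
  simp only [Set.mem_Icc, Prod.mk_le_mk]
  omega

lemma ncard_sub {α : Type*} {S : Set α} (hS : S.Finite) (P : α → Prop) :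
    {x ∈ S | P x}.Finite := hS.subset (fun _ h => h.1)

/-- sign-symmetric sets without axis points have cardinality divisible by four -/
lemma ncard_quarter (S : Set (ℤ × ℤ)) (hS : S.Finite) 
    (h1 : ∀ p ∈ S, ((-p.1, p.2) : ℤ × ℤ) ∈ S) (h2 : ∀ p ∈ S, ((p.1, -p.2) : ℤ × ℤ) ∈ S)
    (P : ℤ → Prop) (hP1 : ∀ p ∈ S, (P (-p.1) ↔ ¬ P p.1)) (hP2 : ∀ p ∈ S, (P (-p.2) ↔ ¬ P p.2)) :
    S.ncard = 4 * {p ∈ S | P p.1 ∧ P p.2}.ncard := by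
  rw [ncard_half S hS (fun p => (-p.1, p.2)) (by simp) h1 (fun p => P p.1) (by simpa using hP1),
    ncard_half {p ∈ S | P p.1} (ncard_sub hS _) (fun p => (p.1, -p.2)) (by simp)
      (fun p hp => ⟨h2 p hp.1, hp.2⟩) (fun p => P p.2) (fun p hp => hP2 p hp.1)]
  have : {x | x ∈ {p | p ∈ S ∧ P p.1} ∧ P x.2} = {p ∈ S | P p.1 ∧ P p.2} := by
    ext x; simp only [Set.mem_ofPred_eq]; tauto
  rw [this]; ring

open Classical in
/-- Indicator (0 or 1) -/
noncomputable def ind (p : Prop) : ℕ := if p then 1 else 0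

lemma ncard_sq (k e : ℤ) (hk : 0 < k) (he : 0 < e) :
    {x : ℤ | k * x ^ 2 = e}.ncard = 2 * ind (∃ x : ℤ, k * x ^ 2 = e) := by
  unfold ind
  split_ifs with h
  · obtain ⟨x, hx⟩ := h
    have hx0 : x ≠ 0 := by rintro rfl; simp at hx; omega
    have : {x : ℤ | k * x ^ 2 = e} = {x, -x} := by
      ext y
      simp only [Set.mem_ofPred_eq, Set.mem_insert_iff, Set.mem_singleton_iff]
      constructor
      · intro h
        have : k * y ^ 2 = k * x ^ 2 := by rw [h, hx]
        have := mul_left_cancel₀ hk.ne' this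
        exact sq_eq_sq_iff_eq_or_eq_neg.1 this
      · rintro (rfl | rfl)
        · exact hx
        · simpa using hx
    rw [this, Set.ncard_pair]
    intro h; omega
  · have : {x : ℤ | k * x ^ 2 = e} = ∅ := by
      ext y; simp only [Set.mem_ofPred_eq, Set.mem_empty_iff_false, iff_false]
      intro hy; exact h ⟨y, hy⟩
    rw [this]; simp

lemma W_mod4 (d k e : ℤ) (hd : 0 < d) (hk : 0 < k) (he : 0 < e) :
    ∃ c, (W d k e).ncard = 2 * ind (∃ x : ℤ, k * x ^ 2 = e) +
      2 * ind (∃ x : ℤ, k * d * x ^ 2 = e) + 4 * c := by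
  have hW := W_finite d k e hd hk
  have hkd : 0 < k * d := mul_pos hk hd
  rw [ncard_split _ hW (fun p => p.2 = 0), ncard_split _ (ncard_sub hW (fun p => ¬ p.2 = 0)) 
    (fun p => p.1 = 0), ← ncard_sq k e hk he, ← ncard_sq (k * d) e hkd he]
  have e1 : {x | x ∈ W d k e ∧ x.2 = 0}.ncard = {x : ℤ | k * x ^ 2 = e}.ncard := by
    refine ncard_bij _ _ (fun p => p.1) (fun x => (x, 0)) ?_ ?_ ?_ ?_
    · rintro ⟨x, y⟩ ⟨h, h'⟩; simp only [W, Set.mem_ofPred_eq] at *; subst h'; simpa using h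
    · intro x h; simp only [W, Set.mem_ofPred_eq] at *; simpa using h
    · rintro ⟨x, y⟩ ⟨h, h'⟩; simp at h'; simp [h']
    · intros; rfl
  have e2 : {x | x ∈ {x | x ∈ W d k e ∧ ¬ x.2 = 0} ∧ x.1 = 0}.ncard
      = {x : ℤ | k * d * x ^ 2 = e}.ncard := by
    refine ncard_bij _ _ (fun p => p.2) (fun x => (0, x)) ?_ ?_ ?_ ?_
    · rintro ⟨x, y⟩ ⟨⟨h, _⟩, h'⟩; simp only [W, Set.mem_ofPred_eq] at *; subst h'
      rw [← h]; ring
    · intro x h; simp only [W, Set.mem_ofPred_eq] at *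
      refine ⟨⟨by rw [← h]; ring, ?_⟩, trivial⟩
      rintro rfl; simp at h; omega
    · rintro ⟨x, y⟩ ⟨h, h'⟩; simp at h'; simp [h']
    · intros; rfl
  have e3 := ncard_quarter {x | x ∈ {x | x ∈ W d k e ∧ ¬ x.2 = 0} ∧ ¬ x.1 = 0}
    (ncard_sub (ncard_sub hW _) _) 
    (by rintro ⟨x, y⟩; simp [W]) (by rintro ⟨x, y⟩; simp [W]) (fun x => 0 < x)
    (by rintro ⟨x, y⟩; simp only [Set.mem_ofPred_eq]; omega)
    (by rintro ⟨x, y⟩; simp only [Set.mem_ofPred_eq]; omega)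
  rw [e1, e2, e3]
  exact ⟨_, by rw [add_assoc]⟩

end Reg23

namespace Reg23

lemma sq_mod8 (x : ℤ) : (x % 2 = 1 ∧ x ^ 2 % 8 = 1) ∨ (x % 4 = 0 ∧ x ^ 2 % 8 = 0) ∨
    (x % 4 = 2 ∧ x ^ 2 % 8 = 4) := by
  have h : x % 8 = 0 ∨ x % 8 = 1 ∨ x % 8 = 2 ∨ x % 8 = 3 ∨ x % 8 = 4 ∨ x % 8 = 5 ∨ x % 8 = 6 ∨
    x % 8 = 7 := by omega
  have h2 : x ^ 2 % 8 = ((x % 8) * (x % 8)) % 8 := by rw [sq, Int.mul_emod]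
  rcases h with h | h | h | h | h | h | h | h <;> rw [h] at h2 <;> norm_num at h2 <;> omega

lemma sq_mod3 (x : ℤ) : (x % 3 = 0 ∧ x ^ 2 % 9 = 0) ∨ (x % 3 ≠ 0 ∧ x ^ 2 % 3 = 1) := by
  have h : x % 9 = 0 ∨ x % 9 = 1 ∨ x % 9 = 2 ∨ x % 9 = 3 ∨ x % 9 = 4 ∨ x % 9 = 5 ∨ x % 9 = 6 ∨
    x % 9 = 7 ∨ x % 9 = 8 := by omega
  have h2 : x ^ 2 % 9 = ((x % 9) * (x % 9)) % 9 := by rw [sq, Int.mul_emod]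
  rcases h with h | h | h | h | h | h | h | h | h <;> rw [h] at h2 <;> norm_num at h2 <;> omega

/-- pairs of integers `≡ -1 (mod 6)` -/
def U (d k e : ℤ) : Set (ℤ × ℤ) := {p | k * ((6 * p.1 - 1) ^ 2 + d * (6 * p.2 - 1) ^ 2) = e}

lemma U_card (d k e : ℤ) (hd : 0 < d) (hk : 0 < k) : {p ∈ W d k e | (p.1 % 2 = 1 ∧ p.1 % 3 ≠ 0) ∧
    (p.2 % 2 = 1 ∧ p.2 % 3 ≠ 0)}.ncard = 4 * (U d k e).ncard := by
  rw [ncard_quarter _ (ncard_sub (W_finite d k e hd hk) _) ?_ ?_ (fun x => x % 6 = 5)]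
  · congr 1
    refine ncard_bij _ _ (fun p => ((p.1 + 1) / 6, (p.2 + 1) / 6))
      (fun p => (6 * p.1 - 1, 6 * p.2 - 1)) ?_ ?_ ?_ ?_
    · rintro ⟨x, y⟩
      simp only [W, U, Set.mem_ofPred_eq]
      rintro ⟨⟨h1, h2⟩, h3, h4⟩
      have e1 : 6 * ((x + 1) / 6) - 1 = x := by omega
      have e2 : 6 * ((y + 1) / 6) - 1 = y := by omega
      rw [e1, e2, h1]
    · rintro ⟨x, y⟩
      simp only [W, U, Set.mem_ofPred_eq]
      intro h
      refine ⟨⟨h, ?_⟩, ?_⟩ <;> omega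
    · rintro ⟨x, y⟩
      simp only [W, Set.mem_ofPred_eq, Prod.mk.injEq]
      omega
    · rintro ⟨x, y⟩
      simp only [Prod.mk.injEq]
      omega
  · rintro ⟨x, y⟩; simp only [Set.mem_ofPred_eq]; rintro ⟨_, h⟩
    have : x % 3 = 1 ∨ x % 3 = 2 := by omega
    rcases this with h3 | h3 <;> constructor <;> intro h' <;> omega
  · rintro ⟨x, y⟩; simp only [Set.mem_ofPred_eq]; rintro ⟨_, h⟩
    have : y % 3 = 1 ∨ y % 3 = 2 := by omega
    rcases this with h3 | h3 <;> constructor <;> intro h' <;> omega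
  · rintro ⟨x, y⟩; simp only [W, Set.mem_ofPred_eq, neg_sq]; omega
  · rintro ⟨x, y⟩; simp only [W, Set.mem_ofPred_eq, neg_sq]; omega

lemma ind_congr {p q : Prop} (h : p ↔ q) : ind p = ind q := by rw [propext h]
lemma ind_false {p : Prop} (h : ¬ p) : ind p = 0 := by simp [ind, h]

lemma jacobi_count (e : ℤ) : (U 2 1 e).ncard % 2 =
    ind (∃ n : ℤ, 3 * (2 * n + 1) ^ 2 = e) % 2 := by
  by_cases he : 0 < e ∧ e % 24 = 3
  swap
  · have h1 : U 2 1 e = ∅ := by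
      ext ⟨k, l⟩
      simp only [U, Set.mem_ofPred_eq, Set.mem_empty_iff_false, iff_false]
      intro h
      have := sq_mod8 (6 * k - 1)
      have := sq_mod8 (6 * l - 1)
      have := sq_mod3 (6 * k - 1)
      have := sq_mod3 (6 * l - 1)
      have := sq_nonneg (6 * k - 1)
      have := sq_nonneg (6 * l - 1)
      omega
    have h2 : ¬ (∃ n : ℤ, 3 * (2 * n + 1) ^ 2 = e) := by
      rintro ⟨n, h⟩
      have := sq_mod8 (2 * n + 1)
      have := sq_nonneg (2 * n + 1)
      omega
    rw [h1, ind_false h2]; simp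
  obtain ⟨m, rfl⟩ : ∃ m, e = 3 * m := ⟨e / 3, by omega⟩
  obtain ⟨hm0, hm⟩ : 0 < m ∧ m % 8 = 1 := by omega
  have h4 := U_card 2 1 (3 * m) (by norm_num) (by norm_num)
  have hW := W_finite 2 1 (3 * m) (by norm_num) (by norm_num)
  have key : ∀ p ∈ W 2 1 (3 * m), p.1 % 2 = 1 ∧ p.2 % 2 = 1 ∧ (p.1 % 3 = 0 ↔ p.2 % 3 = 0) := by
    rintro ⟨x, y⟩ h
    simp only [W, Set.mem_ofPred_eq] at h ⊢
    have := sq_mod8 x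
    have := sq_mod8 y
    have := sq_mod3 x
    have := sq_mod3 y
    omega
  rw [ncard_half _ (ncard_sub hW _) (fun p => (p.1, -p.2)) (by simp) ?_
    (fun p => (p.1 - p.2) % 3 = 0) ?_] at h4
  · have e1 : {p ∈ W 2 1 (3 * m) | (p.1 - p.2) % 3 = 0}.ncard = (W 2 1 m).ncard := by
      refine ncard_bij _ _ (fun p => ((p.1 + 2 * p.2) / 3, (p.2 - p.1) / 3))
        (fun p => (p.1 - 2 * p.2, p.1 + p.2)) ?_ ?_ ?_ ?_
      · rintro ⟨x, y⟩
        simp only [W, Set.mem_ofPred_eq]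
        rintro ⟨h1, h2⟩
        obtain ⟨z, hz⟩ : ∃ z, x = y + 3 * z := ⟨(x - y) / 3, by omega⟩
        subst hz
        have e1 : (y + 3 * z + 2 * y) / 3 = y + z := by omega
        have e2 : (y - (y + 3 * z)) / 3 = - z := by omega
        rw [e1, e2]; nlinarith
      · rintro ⟨x, y⟩
        simp only [W, Set.mem_ofPred_eq]
        intro h
        refine ⟨by rw [← h]; ring, by omega⟩
      · rintro ⟨x, y⟩
        simp only [W, Set.mem_ofPred_eq, Prod.mk.injEq]
        omega
      · rintro ⟨x, y⟩
        simp only [Prod.mk.injEq]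
        omega
    rw [ncard_split _ (ncard_sub hW _) (fun p => p.1 % 3 = 0)] at e1
    have e2 : {x | x ∈ {p ∈ W 2 1 (3 * m) | (p.1 - p.2) % 3 = 0} ∧ x.1 % 3 = 0}.ncard
        = (W 2 3 m).ncard := by
      refine ncard_bij _ _ (fun p => (p.1 / 3, p.2 / 3))
        (fun p => (3 * p.1, 3 * p.2)) ?_ ?_ ?_ ?_
      · rintro ⟨x, y⟩
        simp only [W, Set.mem_ofPred_eq]
        rintro ⟨⟨h1, h2⟩, h3⟩
        obtain ⟨z, hz⟩ : ∃ z, x = 3 * z := ⟨x / 3, by omega⟩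
        obtain ⟨w, hw⟩ : ∃ w, y = 3 * w := ⟨y / 3, by omega⟩
        subst hz hw
        have e1 : (3 * z) / 3 = z := by omega
        have e2 : (3 * w) / 3 = w := by omega
        rw [e1, e2]; nlinarith
      · rintro ⟨x, y⟩
        simp only [W, Set.mem_ofPred_eq]
        intro h
        refine ⟨⟨by rw [← h]; ring, by omega⟩, by omega⟩
      · rintro ⟨x, y⟩
        simp only [W, Set.mem_ofPred_eq, Prod.mk.injEq]
        omega
      · rintro ⟨x, y⟩
        simp only [Prod.mk.injEq]
        omega
    have e3 : {x | x ∈ {p ∈ W 2 1 (3 * m) | (p.1 - p.2) % 3 = 0} ∧ ¬ x.1 % 3 = 0} =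
       {x | x ∈ {p | p ∈ W 2 1 (3 * m) ∧ (p.1 % 2 = 1 ∧ p.1 % 3 ≠ 0) ∧ p.2 % 2 = 1 ∧ p.2 % 3 ≠ 0} ∧ 
        (x.1 - x.2) % 3 = 0} := by
      ext p
      simp only [Set.mem_ofPred_eq]
      constructor
      · rintro ⟨⟨h1, h2⟩, h3⟩
        have := key p h1
        tauto
      · tauto
    rw [e2, e3] at e1
    obtain ⟨c, hc⟩ := W_mod4 2 1 m (by norm_num) (by norm_num) hm0
    obtain ⟨c', hc'⟩ := W_mod4 2 3 m (by norm_num) (by norm_num) hm0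
    have i1 : ¬ (∃ x : ℤ, 1 * 2 * x ^ 2 = m) := by rintro ⟨x, hx⟩; omega
    have i2 : ¬ (∃ x : ℤ, 3 * x ^ 2 = m) := by
      rintro ⟨x, hx⟩; have := sq_mod8 x; omega
    have i3 : ¬ (∃ x : ℤ, 3 * 2 * x ^ 2 = m) := by
      rintro ⟨x, hx⟩; have := sq_mod8 x; omega
    have i4 : (∃ n : ℤ, 3 * (2 * n + 1) ^ 2 = 3 * m) ↔ (∃ x : ℤ, 1 * x ^ 2 = m) := by
      constructor
      · rintro ⟨n, h⟩; exact ⟨2 * n + 1, by linarith⟩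
      · rintro ⟨x, h⟩
        have := sq_mod8 x
        refine ⟨x / 2, ?_⟩
        have : 2 * (x / 2) + 1 = x := by omega
        rw [this]; linarith
    rw [ind_false i1] at hc
    rw [ind_false i2, ind_false i3] at hc'
    rw [ind_congr i4]
    generalize ind _ = i at *
    omega
  · rintro ⟨x, y⟩; simp only [W, Set.mem_ofPred_eq, neg_sq]; omega
  · rintro ⟨x, y⟩; simp only [W, Set.mem_ofPred_eq, neg_sq]
    rintro ⟨h1, h2⟩
    have hx : x % 3 = 1 ∨ x % 3 = 2 := by omega
    have hy : y % 3 = 1 ∨ y % 3 = 2 := by omega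
    rcases hx with h3 | h3 <;> rcases hy with h4 | h4 <;> constructor <;> intro h' <;> omega

end Reg23

namespace Reg23

/-- pairs of odd positive integers -/
def S (d k e : ℤ) : Set (ℕ × ℕ) :=
  {p | k * ((2 * (p.1 : ℤ) + 1) ^ 2 + d * (2 * (p.2 : ℤ) + 1) ^ 2) = e}

/-- pairs of odd integers -/
def O (k e : ℤ) : Set (ℤ × ℤ) := {p ∈ W 23 k e | p.1 % 2 = 1 ∧ p.2 % 2 = 1}

/-- pairs of integers congruent mod 4 -/
def A (k e : ℤ) : Set (ℤ × ℤ) := {p ∈ W 23 k e | (p.1 - p.2) % 4 = 0}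

lemma S_card (k e : ℤ) (hk : 0 < k) : (O k e).ncard = 4 * (S 23 k e).ncard := by
  unfold O
  rw [ncard_quarter _ (ncard_sub (W_finite 23 k e (by norm_num) hk) _) ?_ ?_ (fun x => 0 < x)]
  · congr 1
    refine ncard_bij _ _ (fun p => ((p.1 / 2).toNat, (p.2 / 2).toNat))
      (fun p => (2 * (p.1 : ℤ) + 1, 2 * (p.2 : ℤ) + 1)) ?_ ?_ ?_ ?_
    · rintro ⟨x, y⟩
      simp only [W, S, Set.mem_ofPred_eq]
      rintro ⟨⟨h1, h2⟩, h3, h4⟩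
      have e1 : 2 * (((x / 2).toNat : ℕ) : ℤ) + 1 = x := by omega
      have e2 : 2 * (((y / 2).toNat : ℕ) : ℤ) + 1 = y := by omega
      rw [e1, e2, h1]
    · rintro ⟨x, y⟩
      simp only [W, S, Set.mem_ofPred_eq]
      intro h
      refine ⟨⟨h, ?_⟩, ?_⟩ <;> omega
    · rintro ⟨x, y⟩
      simp only [W, Set.mem_ofPred_eq, Prod.mk.injEq]
      omega
    · rintro ⟨x, y⟩
      simp only [Prod.mk.injEq]
      omega
  · rintro ⟨x, y⟩; simp only [Set.mem_ofPred_eq]; rintro ⟨_, h⟩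
    constructor <;> intro h' <;> omega
  · rintro ⟨x, y⟩; simp only [Set.mem_ofPred_eq]; rintro ⟨_, h⟩
    constructor <;> intro h' <;> omega
  · rintro ⟨x, y⟩; simp only [W, Set.mem_ofPred_eq, neg_sq]; omega
  · rintro ⟨x, y⟩; simp only [W, Set.mem_ofPred_eq, neg_sq]; omega

lemma parity8 (k M x y : ℤ) (hk : k = 1 ∨ k = 3) (h : k * (x ^ 2 + 23 * y ^ 2) = 8 * M) :
    (x % 2 = 1 ∧ y % 2 = 1) ∨ (x % 2 = 0 ∧ y % 2 = 0 ∧ (x - y) % 4 = 0) := by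
  have := sq_mod8 x
  have := sq_mod8 y
  rcases hk with rfl | rfl <;> omega

lemma even_card (k M : ℤ) (hk : k = 1 ∨ k = 3) :
    {p ∈ W 23 k (8 * M) | ¬ p.1 % 2 = 1}.ncard = (W 23 k (2 * M)).ncard := by
  refine ncard_bij _ _ (fun p => (p.1 / 2, p.2 / 2))
    (fun p => (2 * p.1, 2 * p.2)) ?_ ?_ ?_ ?_
  · rintro ⟨x, y⟩
    simp only [W, Set.mem_ofPred_eq]
    rintro ⟨h1, h3⟩
    have := parity8 k M x y hk h1
    obtain ⟨z, hz⟩ : ∃ z, x = 2 * z := ⟨x / 2, by omega⟩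
    obtain ⟨w, hw⟩ : ∃ w, y = 2 * w := ⟨y / 2, by omega⟩
    subst hz hw
    have e1 : (2 * z) / 2 = z := by omega
    have e2 : (2 * w) / 2 = w := by omega
    rw [e1, e2]; nlinarith
  · rintro ⟨x, y⟩
    simp only [W, Set.mem_ofPred_eq]
    intro h
    exact ⟨by linear_combination 4 * h, by omega⟩
  · rintro ⟨x, y⟩
    simp only [W, Set.mem_ofPred_eq, Prod.mk.injEq]
    rintro ⟨h1, h3⟩
    have := parity8 k M x y hk h1
    omega
  · rintro ⟨x, y⟩
    simp only [Prod.mk.injEq]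
    omega

lemma L1 (k M : ℤ) (hk : k = 1 ∨ k = 3) :
    (O k (8 * M)).ncard + (W 23 k (2 * M)).ncard = (W 23 k (8 * M)).ncard := by
  have hk0 : 0 < k := by omega
  rw [ncard_split (W 23 k (8 * M)) (W_finite 23 k _ (by norm_num) hk0) (fun p => p.1 % 2 = 1),
    even_card k M hk]
  congr 2
  ext ⟨x, y⟩
  simp only [O, W, Set.mem_ofPred_eq]
  constructor
  · tauto
  · rintro ⟨h1, h2⟩
    have := parity8 k M x y hk h1
    refine ⟨h1, ?_⟩
    omega

lemma L2 (k M : ℤ) (hk : k = 1 ∨ k = 3) :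
    2 * (A k (8 * M)).ncard = (W 23 k (8 * M)).ncard + (W 23 k (2 * M)).ncard := by
  have hk0 : 0 < k := by omega
  have hW := W_finite 23 k (8 * M) (by norm_num) hk0
  have h1 := L1 k M hk
  have h2 : (O k (8 * M)).ncard = _ := ncard_half (O k (8 * M)) (ncard_sub hW _)
    (fun p => (p.1, -p.2)) (by simp)
    (by rintro ⟨x, y⟩; simp only [O, W, Set.mem_ofPred_eq, neg_sq]; omega)
    (fun p => (p.1 - p.2) % 4 = 0)
    (by
      rintro ⟨x, y⟩; simp only [O, Set.mem_ofPred_eq]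
      rintro ⟨_, h⟩
      constructor <;> intro h' <;> omega)
  have h3 := ncard_split (A k (8 * M)) (ncard_sub hW _) (fun p => p.1 % 2 = 1)
  have e1 : {x | x ∈ A k (8 * M) ∧ x.1 % 2 = 1} =
      {x | x ∈ O k (8 * M) ∧ (x.1 - x.2) % 4 = 0} := by
    ext ⟨x, y⟩
    simp only [A, O, Set.mem_ofPred_eq]
    constructor
    · rintro ⟨⟨h1, h2⟩, h3⟩
      refine ⟨⟨h1, h3, ?_⟩, h2⟩
      omega
    · tauto
  have e2 : {x | x ∈ A k (8 * M) ∧ ¬ x.1 % 2 = 1} = {p ∈ W 23 k (8 * M) | ¬ p.1 % 2 = 1} := by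
    ext ⟨x, y⟩
    simp only [A, Set.mem_ofPred_eq]
    constructor
    · tauto
    · rintro ⟨h1, h2⟩
      have := parity8 k M x y hk h1
      refine ⟨⟨h1, ?_⟩, h2⟩
      omega
  rw [e1, e2, even_card k M hk] at h3
  omega

lemma third_card (k M : ℤ) (P : ℤ → ℤ → Prop) (hP : ∀ x y, P (3 * x) (3 * y) ↔ P x y) :
    {p ∈ W 23 1 (24 * M) | P p.1 p.2 ∧ p.1 % 3 = 0}.ncard =
      {p ∈ W 23 3 (8 * M) | P p.1 p.2}.ncard := by
  have key : ∀ x y : ℤ, 1 * (x ^ 2 + 23 * y ^ 2) = 24 * M → x % 3 = 0 → y % 3 = 0 := by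
    intro x y h h'
    have := sq_mod3 x
    have := sq_mod3 y
    omega
  refine ncard_bij _ _ (fun p => (p.1 / 3, p.2 / 3))
    (fun p => (3 * p.1, 3 * p.2)) ?_ ?_ ?_ ?_
  · rintro ⟨x, y⟩
    simp only [W, Set.mem_ofPred_eq]
    rintro ⟨h1, h2, h3⟩
    have := key x y h1 h3
    obtain ⟨z, hz⟩ : ∃ z, x = 3 * z := ⟨x / 3, by omega⟩
    obtain ⟨w, hw⟩ : ∃ w, y = 3 * w := ⟨y / 3, by omega⟩
    subst hz hw
    have e1 : (3 * z) / 3 = z := by omega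
    have e2 : (3 * w) / 3 = w := by omega
    rw [e1, e2]
    exact ⟨by nlinarith, (hP _ _).1 h2⟩
  · rintro ⟨x, y⟩
    simp only [W, Set.mem_ofPred_eq]
    rintro ⟨h, h2⟩
    exact ⟨by linear_combination 3 * h, (hP _ _).2 h2, by omega⟩
  · rintro ⟨x, y⟩
    simp only [W, Set.mem_ofPred_eq, Prod.mk.injEq]
    rintro ⟨h1, h2, h3⟩
    have := key x y h1 h3
    omega
  · rintro ⟨x, y⟩
    simp only [Prod.mk.injEq]
    omega

lemma L3 (M : ℤ) : (A 1 (24 * M)).ncard + (A 3 (8 * M)).ncard =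
    (W 23 1 (4 * M)).ncard + (A 1 (8 * M)).ncard := by
  have hW := W_finite 23 1 (24 * M) (by norm_num) (by norm_num)
  have hA : (A 1 (24 * M)).Finite := ncard_sub hW _
  have key : ∀ x y : ℤ, 1 * (x ^ 2 + 23 * y ^ 2) = 24 * M → 
      ((x - y) % 3 = 0 ∧ (x + y) % 3 = 0 ∧ x % 3 = 0 ∧ y % 3 = 0) ∨
      ((x - y) % 3 = 0 ∧ (x + y) % 3 ≠ 0 ∧ x % 3 ≠ 0) ∨ 
      ((x - y) % 3 ≠ 0 ∧ (x + y) % 3 = 0 ∧ x % 3 ≠ 0) := by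
    intro x y h
    have h3 : x % 3 = 0 ∨ x % 3 = 1 ∨ x % 3 = 2 := by omega
    have h4 : y % 3 = 0 ∨ y % 3 = 1 ∨ y % 3 = 2 := by omega
    have := sq_mod3 x
    have := sq_mod3 y
    rcases h3 with h3 | h3 | h3 <;> rcases h4 with h4 | h4 | h4 <;> omega
  -- first class
  have a1 : {p ∈ A 1 (24 * M) | (p.1 - p.2) % 3 = 0}.ncard = (W 23 1 (4 * M)).ncard := by
    refine ncard_bij _ _ (fun p => ((p.1 + 23 * p.2) / 12, (p.2 - p.1) / 12))
      (fun p => ((p.1 - 23 * p.2) / 2, (p.1 + p.2) / 2)) ?_ ?_ ?_ ?_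
    · rintro ⟨x, y⟩
      simp only [A, W, Set.mem_ofPred_eq]
      rintro ⟨⟨h1, h2⟩, h3⟩
      obtain ⟨z, hz⟩ : ∃ z, x = y + 12 * z := ⟨(x - y) / 12, by omega⟩
      subst hz
      have e1 : (y + 12 * z + 23 * y) / 12 = 2 * y + z := by omega
      have e2 : (y - (y + 12 * z)) / 12 = - z := by omega
      rw [e1, e2]; nlinarith
    · rintro ⟨x, y⟩
      simp only [A, W, Set.mem_ofPred_eq]
      intro h
      have := sq_mod8 x
      have := sq_mod8 y
      obtain ⟨z, hz⟩ : ∃ z, x = 2 * z - y := ⟨(x + y) / 2, by omega⟩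
      subst hz
      have e1 : (2 * z - y - 23 * y) / 2 = z - 12 * y := by omega
      have e2 : (2 * z - y + y) / 2 = z := by omega
      rw [e1, e2]
      refine ⟨⟨by linear_combination 6 * h, by omega⟩, by omega⟩
    · rintro ⟨x, y⟩
      simp only [A, W, Set.mem_ofPred_eq, Prod.mk.injEq]
      rintro ⟨⟨h1, h2⟩, h3⟩
      obtain ⟨z, hz⟩ : ∃ z, x = y + 12 * z := ⟨(x - y) / 12, by omega⟩
      subst hz
      omega
    · rintro ⟨x, y⟩
      simp only [W, Set.mem_ofPred_eq, Prod.mk.injEq]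
      intro h
      have := sq_mod8 x
      have := sq_mod8 y
      obtain ⟨z, hz⟩ : ∃ z, x = 2 * z - y := ⟨(x + y) / 2, by omega⟩
      subst hz
      omega
  -- second class
  have a2 : {p ∈ A 1 (24 * M) | (p.1 + p.2) % 3 = 0}.ncard = (A 1 (8 * M)).ncard := by
    refine ncard_bij _ _ (fun p => ((5 * p.1 + 23 * p.2) / 12, (p.1 - 5 * p.2) / 12))
      (fun p => ((5 * p.1 + 23 * p.2) / 4, (p.1 - 5 * p.2) / 4)) ?_ ?_ ?_ ?_
    · rintro ⟨x, y⟩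
      simp only [A, W, Set.mem_ofPred_eq]
      rintro ⟨⟨h1, h2⟩, h3⟩
      obtain ⟨z, hz⟩ : ∃ z, x = 5 * y + 12 * z := ⟨(x - 5 * y) / 12, by omega⟩
      subst hz
      have e1 : (5 * (5 * y + 12 * z) + 23 * y) / 12 = 4 * y + 5 * z := by omega
      have e2 : (5 * y + 12 * z - 5 * y) / 12 = z := by omega
      rw [e1, e2]
      refine ⟨by nlinarith, by omega⟩
    · rintro ⟨x, y⟩
      simp only [A, W, Set.mem_ofPred_eq]
      rintro ⟨h, h2⟩
      obtain ⟨z, hz⟩ : ∃ z, x = y + 4 * z := ⟨(x - y) / 4, by omega⟩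
      subst hz
      have e1 : (5 * (y + 4 * z) + 23 * y) / 4 = 7 * y + 5 * z := by omega
      have e2 : (y + 4 * z - 5 * y) / 4 = z - y := by omega
      rw [e1, e2]
      refine ⟨⟨by linear_combination 3 * h, by omega⟩, by omega⟩
    · rintro ⟨x, y⟩
      simp only [A, W, Set.mem_ofPred_eq, Prod.mk.injEq]
      rintro ⟨⟨h1, h2⟩, h3⟩
      obtain ⟨z, hz⟩ : ∃ z, x = 5 * y + 12 * z := ⟨(x - 5 * y) / 12, by omega⟩
      subst hz
      omega
    · rintro ⟨x, y⟩
      simp only [A, W, Set.mem_ofPred_eq, Prod.mk.injEq]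
      rintro ⟨h, h2⟩
      obtain ⟨z, hz⟩ : ∃ z, x = y + 4 * z := ⟨(x - y) / 4, by omega⟩
      subst hz
      omega
  have a3 := third_card 1 M (fun x y => (x - y) % 4 = 0) (by intro x y; omega)
  have b1 := ncard_split _ hA (fun p => (p.1 - p.2) % 3 = 0)
  have b2 := ncard_split _ (ncard_sub hA (fun p => (p.1 + p.2) % 3 = 0)) (fun p => p.1 % 3 = 0)
  have c1 : {x | x ∈ A 1 (24 * M) ∧ ¬ (x.1 - x.2) % 3 = 0} =
      {x | x ∈ {x | x ∈ A 1 (24 * M) ∧ (x.1 + x.2) % 3 = 0} ∧ ¬ x.1 % 3 = 0} := by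
    ext ⟨x, y⟩
    simp only [A, W, Set.mem_ofPred_eq]
    constructor
    · rintro ⟨⟨h1, h2⟩, h3⟩
      have := key x y h1
      tauto
    · rintro ⟨⟨⟨h1, h2⟩, h3⟩, h4⟩
      have := key x y h1
      tauto
  have c2 : {p ∈ W 23 1 (24 * M) | (p.1 - p.2) % 4 = 0 ∧ p.1 % 3 = 0} =
      {x | x ∈ {x | x ∈ A 1 (24 * M) ∧ (x.1 + x.2) % 3 = 0} ∧ x.1 % 3 = 0} := by
    ext ⟨x, y⟩
    simp only [A, W, Set.mem_ofPred_eq]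
    constructor
    · rintro ⟨h1, h2, h3⟩
      have := key x y h1
      tauto
    · tauto
  rw [c2] at a3
  rw [c1] at b1
  unfold A at *
  omega

lemma L4 (M : ℤ) : (O 1 (24 * M)).ncard = 4 * (U 23 1 (24 * M)).ncard + (O 3 (8 * M)).ncard := by
  have hW := W_finite 23 1 (24 * M) (by norm_num) (by norm_num)
  rw [← U_card 23 1 _ (by norm_num) (by norm_num)]
  have a3 := third_card 1 M (fun x y => x % 2 = 1 ∧ y % 2 = 1) (by intro x y; omega)
  unfold O
  rw [← a3, ncard_split _ (ncard_sub hW _) (fun p => p.1 % 3 = 0), add_comm]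
  congr 2
  · ext ⟨x, y⟩
    simp only [W, Set.mem_ofPred_eq]
    constructor
    · rintro ⟨⟨h1, h2, h3⟩, h4⟩
      have := sq_mod3 x
      have := sq_mod3 y
      refine ⟨h1, ⟨h2, h4⟩, h3, ?_⟩
      omega
    · tauto
  · ext ⟨x, y⟩
    simp only [Set.mem_ofPred_eq]
    tauto

lemma ex1 (k M : ℤ) (hk : k = 1 ∨ k = 23) :
    (∃ x : ℤ, k * x ^ 2 = 6 * M) ↔ (∃ x : ℤ, 3 * k * x ^ 2 = 8 * M) := by
  constructor
  · rintro ⟨x, h⟩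
    have := sq_mod3 x
    obtain ⟨z, rfl⟩ : ∃ z, x = 3 * z := ⟨x / 3, by rcases hk with rfl | rfl <;> omega⟩
    exact ⟨2 * z, by linarith⟩
  · rintro ⟨x, h⟩
    have := sq_mod8 x
    obtain ⟨z, rfl⟩ : ∃ z, x = 2 * z := ⟨x / 2, by rcases hk with rfl | rfl <;> omega⟩
    exact ⟨3 * z, by linarith⟩

lemma G_eq (M : ℤ) (hM : 0 < M) : ∃ c, 
    2 * ((U 23 1 (24 * M)).ncard + (S 23 3 (24 * M)).ncard) + 4 * c =
      (W 23 1 (4 * M)).ncard + (W 23 1 (8 * M)).ncard ∧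
      (W 23 1 (8 * M)).ncard = 4 * (S 23 3 (24 * M)).ncard + (W 23 1 (2 * M)).ncard := by
  have l1 := L1 1 (3 * M) (by norm_num)
  have l1' := L1 3 M (by norm_num)
  have l1'' := L1 1 M (by norm_num)
  have l2 := L2 1 (3 * M) (by norm_num)
  have l2' := L2 3 M (by norm_num)
  have l2'' := L2 1 M (by norm_num)
  have l3 := L3 M
  have l4 := L4 M
  have l5 := S_card 1 (8 * M) (by norm_num)
  have l6 : S 23 1 (8 * M) = S 23 3 (24 * M) := by
    ext ⟨x, y⟩
    simp only [S, Set.mem_ofPred_eq]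
    constructor <;> intro h <;> linarith
  have t1 : 8 * (3 * M) = 24 * M := by ring
  have t2 : 2 * (3 * M) = 6 * M := by ring
  rw [t1, t2] at l1 l2
  rw [l6] at l5
  obtain ⟨c, hc⟩ := W_mod4 23 1 (6 * M) (by norm_num) (by norm_num) (by omega)
  obtain ⟨c', hc'⟩ := W_mod4 23 3 (8 * M) (by norm_num) (by norm_num) (by omega)
  have i1 := ind_congr (ex1 1 M (by norm_num))
  have i2 := ind_congr (ex1 23 M (by norm_num))
  norm_num at hc hc' i1 i2
  rw [i1, i2] at hc
  exact ⟨ind (∃ x : ℤ, 3 * x ^ 2 = 8 * M) + ind (∃ x : ℤ, 69 * x ^ 2 = 8 * M) + c + c',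
    by omega, by omega⟩

lemma ind_odd (k M : ℤ) (hk : k = 1 ∨ k = 23) (hM : M % 2 = 1) :
    (∃ x : ℤ, k * x ^ 2 = 4 * M) ↔ (∃ x : ℤ, 24 * k * (2 * x + 1) ^ 2 = 24 * M) := by
  constructor
  · rintro ⟨x, h⟩
    have h8 := sq_mod8 x
    obtain ⟨z, rfl⟩ : ∃ z, x = 2 * z := ⟨x / 2, by rcases hk with rfl | rfl <;> omega⟩
    have h8' := sq_mod8 z
    have h9 : k * z ^ 2 = M := by linarith
    obtain ⟨w, rfl⟩ : ∃ w, z = 2 * w + 1 := ⟨z / 2, by rcases hk with rfl | rfl <;> omega⟩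
    exact ⟨w, by linarith⟩
  · rintro ⟨x, h⟩
    exact ⟨2 * (2 * x + 1), by linarith⟩

lemma modular_count (e : ℤ) : ((U 23 1 e).ncard + (U 23 2 e).ncard + (S 23 3 e).ncard + 
    (S 23 6 e).ncard) % 2 = (ind (∃ n : ℤ, 24 * (2 * n + 1) ^ 2 = e) + 
    ind (∃ n : ℤ, 552 * (2 * n + 1) ^ 2 = e)) % 2 := by
  have U24 : ∀ k l : ℤ, 0 < ((6 * k - 1) ^ 2 + 23 * (6 * l - 1) ^ 2) ∧
      ((6 * k - 1) ^ 2 + 23 * (6 * l - 1) ^ 2) % 24 = 0 := by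
    intro k l
    have := sq_mod8 (6 * k - 1)
    have := sq_mod8 (6 * l - 1)
    have := sq_mod3 (6 * k - 1)
    have := sq_mod3 (6 * l - 1)
    have := sq_nonneg (6 * k - 1)
    have := sq_nonneg (6 * l - 1)
    omega
  have S24 : ∀ k l : ℤ, 0 < ((2 * k + 1) ^ 2 + 23 * (2 * l + 1) ^ 2) ∧
      ((2 * k + 1) ^ 2 + 23 * (2 * l + 1) ^ 2) % 8 = 0 := by
    intro k l
    have := sq_mod8 (2 * k + 1)
    have := sq_mod8 (2 * l + 1)
    have := sq_nonneg (2 * k + 1)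
    have := sq_nonneg (2 * l + 1)
    omega
  by_cases he : 0 < e ∧ e % 24 = 0
  swap
  · have h1 : U 23 1 e = ∅ := by
      ext ⟨k, l⟩
      simp only [U, Set.mem_ofPred_eq, Set.mem_empty_iff_false, iff_false]
      have := U24 k l
      omega
    have h2 : U 23 2 e = ∅ := by
      ext ⟨k, l⟩
      simp only [U, Set.mem_ofPred_eq, Set.mem_empty_iff_false, iff_false]
      have := U24 k l
      omega
    have h3 : S 23 3 e = ∅ := by
      ext ⟨k, l⟩
      simp only [S, Set.mem_ofPred_eq, Set.mem_empty_iff_false, iff_false]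
      have := S24 k l
      omega
    have h4 : S 23 6 e = ∅ := by
      ext ⟨k, l⟩
      simp only [S, Set.mem_ofPred_eq, Set.mem_empty_iff_false, iff_false]
      have := S24 k l
      omega
    have h5 : ¬ (∃ n : ℤ, 24 * (2 * n + 1) ^ 2 = e) := by
      rintro ⟨n, h⟩
      have := sq_mod8 (2 * n + 1)
      have := sq_nonneg (2 * n + 1)
      omega
    have h6 : ¬ (∃ n : ℤ, 552 * (2 * n + 1) ^ 2 = e) := by
      rintro ⟨n, h⟩
      have := sq_mod8 (2 * n + 1)
      have := sq_nonneg (2 * n + 1)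
      omega
    rw [h1, h2, h3, h4, ind_false h5, ind_false h6]; simp
  obtain ⟨M, rfl⟩ : ∃ m, e = 24 * m := ⟨e / 24, by omega⟩
  have hM : 0 < M := by omega
  obtain ⟨c, h1, h2⟩ := G_eq M hM
  rcases Int.emod_two_eq_zero_or_one M with h | h
  · obtain ⟨N, rfl⟩ : ∃ N, M = 2 * N := ⟨M / 2, by omega⟩
    obtain ⟨c', h1', h2'⟩ := G_eq N (by omega)
    have u2 : U 23 2 (24 * (2 * N)) = U 23 1 (24 * N) := by
      ext ⟨x, y⟩
      simp only [U, Set.mem_ofPred_eq]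
      constructor <;> intro h <;> linarith
    have s2 : S 23 6 (24 * (2 * N)) = S 23 3 (24 * N) := by
      ext ⟨x, y⟩
      simp only [S, Set.mem_ofPred_eq]
      constructor <;> intro h <;> linarith
    have h5 : ¬ (∃ n : ℤ, 24 * (2 * n + 1) ^ 2 = 24 * (2 * N)) := by
      rintro ⟨n, h⟩
      have := sq_mod8 (2 * n + 1)
      omega
    have h6 : ¬ (∃ n : ℤ, 552 * (2 * n + 1) ^ 2 = 24 * (2 * N)) := by
      rintro ⟨n, h⟩
      have := sq_mod8 (2 * n + 1)
      omega
    rw [u2, s2, ind_false h5, ind_false h6]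
    obtain ⟨d, hd⟩ := W_mod4 23 1 (8 * N) (by norm_num) (by norm_num) (by omega)
    obtain ⟨d', hd'⟩ := W_mod4 23 1 (4 * N) (by norm_num) (by norm_num) (by omega)
    have t1 : 4 * (2 * N) = 8 * N := by ring
    have t2 : 2 * (2 * N) = 4 * N := by ring
    rw [t1] at h1
    rw [t2] at h2
    omega
  · have u2 : U 23 2 (24 * M) = ∅ := by
      ext ⟨k, l⟩
      simp only [U, Set.mem_ofPred_eq, Set.mem_empty_iff_false, iff_false]
      have := U24 k l
      omega
    have s2 : S 23 6 (24 * M) = ∅ := by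
      ext ⟨k, l⟩
      simp only [S, Set.mem_ofPred_eq, Set.mem_empty_iff_false, iff_false]
      have := S24 k l
      omega
    have w2 : W 23 1 (2 * M) = ∅ := by
      ext ⟨x, y⟩
      simp only [W, Set.mem_ofPred_eq, Set.mem_empty_iff_false, iff_false]
      have := sq_mod8 x
      have := sq_mod8 y
      omega
    obtain ⟨d, hd⟩ := W_mod4 23 1 (4 * M) (by norm_num) (by norm_num) (by omega)
    have i1 := ind_congr (ind_odd 1 M (by norm_num) h)
    have i2 := ind_congr (ind_odd 23 M (by norm_num) h)
    norm_num at hd i1 i2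
    rw [u2, s2, Set.ncard_empty, Set.ncard_empty]
    rw [w2, Set.ncard_empty] at h2
    rw [i1, i2] at hd
    norm_num
    omega

end Reg23

namespace Reg23
open PowerSeries

/-- generating series modulo two of a counting function -/
noncomputable def gf {ι : Type*} (α : ι → ℕ) : PowerSeries (ZMod 2) :=
  PowerSeries.mk fun n => (({i | α i = n}.ncard : ℕ) : ZMod 2)

/-- finite fibres -/
def FF {ι : Type*} (α : ι → ℕ) : Prop := ∀ n, {i | α i = n}.Finite

lemma gf_mul {ι κ : Type*} (α : ι → ℕ) (β : κ → ℕ) (hα : FF α) (hβ : FF β) :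
    gf α * gf β = gf (fun p : ι × κ => α p.1 + β p.2) := by
  classical
  ext n
  have hsub : {p : ι × κ | α p.1 + β p.2 = n} ⊆
      ⋃ b ∈ Finset.HasAntidiagonal.antidiagonal n, ({i | α i = b.1} ×ˢ {i | β i = b.2}) := by
    rintro ⟨i, j⟩ h
    simp only [Set.mem_ofPred_eq] at h
    simp only [Set.mem_iUnion]
    exact ⟨(α i, β j), by simpa using h, by simp⟩
  have hfin : {p : ι × κ | α p.1 + β p.2 = n}.Finite :=
    (Set.Finite.biUnion (Finset.finite_toSet _) (fun b _ => (hα b.1).prod (hβ b.2))).subset hsub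
  rw [coeff_mul]
  simp only [gf, coeff_mk]
  rw [Set.ncard_eq_toFinset_card _ hfin, Finset.card_eq_sum_card_fiberwise
    (f := fun p : ι × κ => (α p.1, β p.2)) (t := Finset.HasAntidiagonal.antidiagonal n)]
  · push_cast
    refine Finset.sum_congr rfl (fun b hb => ?_)
    rw [← Nat.cast_mul, ← Set.ncard_prod, ← Set.ncard_coe_finset]
    congr 2
    ext ⟨i, j⟩
    simp only [Finset.HasAntidiagonal.mem_antidiagonal] at hb
    simp only [Set.mem_prod, Set.mem_ofPred_eq, Finset.coe_filter, Set.Finite.mem_toFinset,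
      Prod.ext_iff]
    constructor
    · rintro ⟨h1, h2⟩; exact ⟨by omega, h1, h2⟩
    · exact fun h => h.2
  · intro p hp
    simpa using hp

lemma gf_expand {ι : Type*} (α : ι → ℕ) (k : ℕ) (hk : k ≠ 0) :
    expand k hk (gf α) = gf (fun i => k * α i) := by
  ext n
  by_cases h : k ∣ n
  · obtain ⟨m, rfl⟩ := h
    rw [coeff_expand_mul]
    simp only [gf, coeff_mk]
    simp [hk]
  · rw [coeff_expand_of_not_dvd _ _ _ h]
    simp only [gf, coeff_mk]
    have : {i | k * α i = n} = ∅ := by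
      ext i
      simp only [Set.mem_ofPred_eq, Set.mem_empty_iff_false, iff_false]
      rintro rfl
      exact h ⟨_, rfl⟩
    rw [this]; simp

lemma FF_mul {ι : Type*} {α : ι → ℕ} (h : FF α) (k : ℕ) (hk : k ≠ 0) : FF (fun i => k * α i) := by
  intro n
  refine (h (n / k)).subset ?_
  rintro i rfl
  simp only [Set.mem_ofPred_eq]
  rw [Nat.mul_div_cancel_left _ (by omega)]

lemma gf_X_mul {ι : Type*} (α : ι → ℕ) : X * gf α = gf (fun i => α i + 1) := by
  ext n
  rcases n with _ | n
  · simp [gf]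
  · rw [mul_comm, coeff_succ_mul_X]
    simp [gf]

lemma sq_eq (f : PowerSeries (ZMod 2)) : f ^ 2 = expand 2 two_ne_zero f := by
  have : Fact (Nat.Prime 2) := ⟨Nat.prime_two⟩
  have h := MvPowerSeries.map_frobenius_expand 2 two_ne_zero (f := f)
  rw [ZMod.frobenius_zmod] at h
  rw [← h, MvPowerSeries.map_id]
  rfl

lemma gf_pent : gf pentagonal = pentagonalSeries (ZMod 2) := by
  ext n
  simp only [gf, coeff_mk]
  by_cases h : n ∈ Set.range pentagonal
  · obtain ⟨k, rfl⟩ := h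
    rw [coeff_pentagonalSeries_pentagonal]
    have : {i | pentagonal i = pentagonal k} = {k} := by
      ext i; simp [pentagonal_injective.eq_iff]
    rw [this]
    have : ∀ u : ℤˣ, ((u : ℤ) : ZMod 2) = 1 := by
      intro u
      rcases Int.units_eq_one_or u with rfl | rfl <;> decide
    simp [this]
  · rw [coeff_pentagonalSeries_eq_zero _ h]
    have : {i | pentagonal i = n} = ∅ := by
      ext i
      simp only [Set.mem_ofPred_eq, Set.mem_empty_iff_false, iff_false]
      rintro rfl
      exact h ⟨_, rfl⟩
    rw [this]; simp

/-- exponents of the eta series -/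
def al (k : ℤ) : ℕ := 24 * pentagonal k + 1

lemma al_eq (k : ℤ) : (al k : ℤ) = (6 * k - 1) ^ 2 := by
  have := two_mul_natCast_pentagonal k
  simp only [al]
  push_cast
  linarith

lemma al_inj : Function.Injective al := by
  intro a b h
  apply pentagonal_injective
  simp only [al] at h; omega

lemma FF_inj {ι : Type*} {α : ι → ℕ} (h : Function.Injective α) : FF α := by
  intro n
  apply Set.Subsingleton.finite
  intro a ha b hb
  exact h (ha.trans hb.symm)

/-- the eta series -/
noncomputable def eta : PowerSeries (ZMod 2) := gf al

lemma eta_eq : eta = X * expand 24 (by norm_num) (pentagonalSeries (ZMod 2)) := by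
  rw [← gf_pent, gf_expand, gf_X_mul]; rfl

/-- exponents of the cubed eta series -/
def be (n : ℕ) : ℕ := 3 * (2 * n + 1) ^ 2

lemma be_inj : Function.Injective be := by
  intro a b h
  simp only [be] at h
  have : 2 * a + 1 = 2 * b + 1 := by
    apply Nat.pow_left_injective (n := 2) (by norm_num)
    simp only; omega
  omega

lemma ncard_ind (k m : ℕ) (hk : k ≠ 0) : {n : ℕ | k * be n = m}.ncard =
    ind (∃ n : ℤ, (3 * k : ℤ) * (2 * n + 1) ^ 2 = m) := by
  have hiff : (∃ n : ℤ, (3 * k : ℤ) * (2 * n + 1) ^ 2 = m) ↔ ∃ n : ℕ, k * be n = m := by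
    constructor
    · rintro ⟨n, h⟩
      have key : ∀ n : ℕ, (3 * k : ℤ) * (2 * (n : ℤ) + 1) ^ 2 = m → k * be n = m := by
        intro n h
        simp only [be]
        zify
        linarith
      by_cases hn : 0 ≤ n
      · obtain ⟨n, rfl⟩ := Int.eq_ofNat_of_zero_le hn
        exact ⟨n, key n h⟩
      · obtain ⟨l, hl⟩ := Int.eq_ofNat_of_zero_le (show 0 ≤ -n - 1 by omega)
        refine ⟨l, key l ?_⟩
        rw [← h, ← hl]; ring
    · rintro ⟨n, h⟩
      refine ⟨n, ?_⟩
      rw [← h]; simp only [be]; push_cast; ring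
  rw [ind_congr hiff]
  by_cases h : ∃ n : ℕ, k * be n = m
  · obtain ⟨n, hn⟩ := h
    have : {n : ℕ | k * be n = m} = {n} := by
      ext i
      simp only [Set.mem_ofPred_eq, Set.mem_singleton_iff]
      constructor
      · intro hi
        apply be_inj
        exact Nat.eq_of_mul_eq_mul_left (by omega) (hi.trans hn.symm)
      · rintro rfl; exact hn
    rw [this, Set.ncard_singleton]
    simp only [ind]
    rw [if_pos ⟨n, hn⟩]
  · rw [ind_false h]
    have : {n : ℕ | k * be n = m} = ∅ := by
      ext i
      simp only [Set.mem_ofPred_eq, Set.mem_empty_iff_false, iff_false]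
      exact fun hi => h ⟨i, hi⟩
    rw [this]; simp

lemma cast_of_mod {a b : ℕ} (h : a % 2 = b % 2) : (a : ZMod 2) = b :=
  (ZMod.natCast_eq_natCast_iff a b 2).2 h

lemma U_set (d k m : ℕ) : {p : ℤ × ℤ | k * (al p.1 + d * al p.2) = m} = U d k m := by
  ext ⟨x, y⟩
  simp only [U, Set.mem_ofPred_eq]
  rw [← al_eq, ← al_eq]
  norm_cast

lemma S_set (d k m : ℕ) : {p : ℕ × ℕ | k * (be p.1 + d * be p.2) = m} = S d (3 * k) m := by
  ext ⟨x, y⟩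
  simp only [S, Set.mem_ofPred_eq, be]
  zify
  constructor <;> intro h <;> rw [← h] <;> ring

lemma jacobi : eta ^ 3 = gf be := by
  rw [pow_succ', sq_eq, eta, gf_expand, gf_mul _ _ (FF_inj al_inj) (FF_mul (FF_inj al_inj) _ two_ne_zero)]
  ext m
  simp only [gf, coeff_mk]
  apply cast_of_mod
  have h1 := U_set 2 1 m
  have h2 := ncard_ind 1 m (by norm_num)
  simp only [one_mul] at h1 h2
  rw [h1, h2]
  have := jacobi_count m
  push_cast
  simpa using this

/-- the modular equation of degree 23 -/
lemma modular_eq (y : PowerSeries (ZMod 2)) (hy : y = expand 23 (by norm_num) eta) :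
    eta ^ 24 + y ^ 24 = eta * y + (eta * y) ^ 2 + (eta * y) ^ 3 + (eta * y) ^ 6 := by
  have h23 : (23 : ℕ) ≠ 0 := by norm_num
  have h8 : ∀ f : PowerSeries (ZMod 2), f ^ 24 = expand 8 (by norm_num) (f ^ 3) := by
    intro f
    have : f ^ 24 = (((f ^ 3) ^ 2) ^ 2) ^ 2 := by ring
    rw [this, sq_eq (f ^ 3), sq_eq, sq_eq, ← expand_mul, ← expand_mul]
  have hF : eta * y = gf (fun p : ℤ × ℤ => al p.1 + 23 * al p.2) := by
    rw [hy, eta, gf_expand, gf_mul _ _ (FF_inj al_inj) (FF_mul (FF_inj al_inj) _ h23)]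
  have hF2 : (eta * y) ^ 2 = gf (fun p : ℤ × ℤ => 2 * (al p.1 + 23 * al p.2)) := by
    rw [sq_eq, hF, gf_expand]
  have hy3 : y ^ 3 = gf (fun n => 23 * be n) := by
    rw [hy, ← map_pow, jacobi, gf_expand]
  have hF3 : (eta * y) ^ 3 = gf (fun p : ℕ × ℕ => be p.1 + 23 * be p.2) := by
    rw [mul_pow, jacobi, hy3, gf_mul _ _ (FF_inj be_inj) (FF_mul (FF_inj be_inj) _ h23)]
  have hF6 : (eta * y) ^ 6 = gf (fun p : ℕ × ℕ => 2 * (be p.1 + 23 * be p.2)) := by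
    have : (eta * y) ^ 6 = ((eta * y) ^ 3) ^ 2 := by ring
    rw [this, sq_eq, hF3, gf_expand]
  have hx24 : eta ^ 24 = gf (fun n => 8 * be n) := by
    rw [h8, jacobi, gf_expand]
  have hy24 : y ^ 24 = gf (fun n => 184 * be n) := by
    rw [h8, hy3, gf_expand]
    congr 1; ext n; ring
  rw [hF6, hF3, hF2, hF, hx24, hy24]
  ext m
  simp only [gf, coeff_mk, map_add]
  have h1 := U_set 23 1 m
  have h2 := U_set 23 2 m
  have h3 := S_set 23 1 m
  have h4 := S_set 23 2 m
  have h5 := ncard_ind 8 m (by norm_num)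
  have h6 := ncard_ind 184 m (by norm_num)
  simp only [one_mul] at h1 h3
  rw [h1, h2, h3, h4, h5, h6]
  have := modular_count m
  have := cast_of_mod this
  push_cast at this ⊢
  exact this.symm

end Reg23

namespace Reg23

section vieta
open Polynomial

lemma vieta {A : Type*} [CommRing A] [IsDomain A] [CharP A 2] {ι : Type*} [Fintype ι]
    [DecidableEq ι] (hcard : Fintype.card ι = 24) (r : ι → A) (hr : Function.Injective r) (x : A)
    (h : ∀ i, r i ^ 24 + x ^ 24 =
      x * r i + (x * r i) ^ 2 + (x * r i) ^ 3 + (x * r i) ^ 6) :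
    ∏ i, r i = x ^ 24 ∧ ∑ i, ∏ j ∈ Finset.univ.erase i, r j = x := by
  have hneg : ∀ a : A, -a = a := fun a => CharTwo.neg_eq a
  have hpoly : (X ^ 24 + (C (x ^ 24) + C x * X + C (x ^ 2) * X ^ 2 + C (x ^ 3) * X ^ 3 +
      C (x ^ 6) * X ^ 6) : A[X]) = Lagrange.nodal Finset.univ r := by
    have hd : (C (x ^ 24) + C x * X + C (x ^ 2) * X ^ 2 + C (x ^ 3) * X ^ 3 +
      C (x ^ 6) * X ^ 6 : A[X]).degree < 24 := by
      refine lt_of_le_of_lt (b := 6) ?_ (by norm_num)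
      compute_degree
    have hm : (X ^ 24 + (C (x ^ 24) + C x * X + C (x ^ 2) * X ^ 2 + C (x ^ 3) * X ^ 3 +
      C (x ^ 6) * X ^ 6) : A[X]).Monic := monic_X_pow_add hd
    have hdeg : (X ^ 24 + (C (x ^ 24) + C x * X + C (x ^ 2) * X ^ 2 + C (x ^ 3) * X ^ 3 +
      C (x ^ 6) * X ^ 6) : A[X]).degree = 24 := by
      rw [degree_add_eq_left_of_degree_lt, degree_X_pow]
      · rfl
      · rw [degree_X_pow]; exact hd
    refine eq_of_degree_le_of_eval_index_eq Finset.univ (v := r) hr.injOn ?_ ?_ ?_ ?_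
    · rw [hdeg, Finset.card_univ, hcard]; rfl
    · rw [hdeg, Lagrange.degree_nodal, Finset.card_univ, hcard]; rfl
    · rw [hm.leadingCoeff, Lagrange.nodal_monic.leadingCoeff]
    · intro i _
      rw [Lagrange.eval_nodal_at_node (Finset.mem_univ i)]
      simp only [eval_add, eval_mul, eval_C, eval_X, eval_pow]
      have h2 := h i
      rw [← sub_eq_zero, sub_eq_add_neg, hneg] at h2
      rw [← h2]; ring
  have h0 := congrArg (eval 0) hpoly
  have h1 := congrArg (fun p => eval 0 (derivative p)) hpoly
  constructor
  · rw [Lagrange.eval_nodal] at h0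
    simpa [hneg] using h0.symm
  · simp only [Lagrange.derivative_nodal, eval_finsetSum, Lagrange.eval_nodal] at h1
    simp only [zero_sub, hneg] at h1
    rw [← h1]
    have hz : derivative (C x ^ 24 : A[X]) = 0 := by rw [← C_pow, derivative_C]
    simp [hz]

end vieta

open PowerSeries

lemma main_identity {K : Type*} [Field K] [CharP K 2] (ζ : K) (hζ : IsPrimitiveRoot ζ 23)
    (h s : PowerSeries K) (hs : h * s = X) (h1 : coeff 1 h = 1)
    (hmod : ∀ y, y = expand 23 (by norm_num) h → h ^ 24 + y ^ 24 =
      h * y + (h * y) ^ 2 + (h * y) ^ 3 + (h * y) ^ 6) :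
    X ^ 528 * ∑ j : Fin 23, C ((ζ ^ (j : ℕ))⁻¹) * rescale (ζ ^ (j : ℕ)) s +
      expand 23 (by norm_num) (expand 23 (by norm_num) s) = (expand 23 (by norm_num) s) ^ 23 := by
  have h23 : (23 : ℕ) ≠ 0 := by norm_num
  have : CharP (PowerSeries K) 2 := charP_of_injective_ringHom (C_injective (R := K)) 2
  set x := expand 23 h23 h with hx
  have hζ0 : ζ ≠ 0 := hζ.ne_zero h23
  have hfix : ∀ (j : ℕ) (f : PowerSeries K), rescale (ζ ^ j) (expand 23 h23 f) = expand 23 h23 f := by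
    intro j f
    ext n
    rw [coeff_rescale]
    by_cases hn : 23 ∣ n
    · obtain ⟨m, rfl⟩ := hn
      rw [← pow_mul, mul_comm j, mul_assoc, pow_mul, hζ.pow_eq_one, one_pow, one_mul]
    · rw [coeff_expand_of_not_dvd _ _ _ hn, mul_zero]
  let r : Option (Fin 23) → PowerSeries K := fun o => 
    o.elim (expand 23 h23 x) (fun j => rescale (ζ ^ (j : ℕ)) h)
  let t : Option (Fin 23) → PowerSeries K := fun o => 
    o.elim (expand 23 h23 (expand 23 h23 s)) (fun j => rescale (ζ ^ (j : ℕ)) s)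
  have hrinj : Function.Injective r := by
    have c0 : ∀ j : ℕ, coeff 1 (rescale (ζ ^ j) h) = ζ ^ j := by
      intro j; rw [coeff_rescale, h1]; simp
    have c1 : coeff 1 (expand 23 h23 x) = 0 := by
      apply coeff_expand_of_not_dvd; norm_num
    intro a b hab
    have hab' := congrArg (coeff 1) hab
    rcases a with _ | a <;> rcases b with _ | b
    · rfl
    · simp only [r, Option.elim, c0, c1] at hab'
      exact absurd hab'.symm (pow_ne_zero _ hζ0)
    · simp only [r, Option.elim, c0, c1] at hab'
      exact absurd hab' (pow_ne_zero _ hζ0)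
    · simp only [r, Option.elim, c0] at hab'
      rw [Option.some_inj]
      exact Fin.ext (hζ.pow_inj a.2 b.2 hab')
  have hm := hmod x rfl
  obtain ⟨hv0, hv1⟩ := vieta (ι := Option (Fin 23)) (by simp) r hrinj x (by
    intro o
    rcases o with _ | j
    · simp only [r, Option.elim]
      have := congrArg (expand 23 h23) hm
      simp only [map_add, map_pow, map_mul, ← hx] at this
      rw [← this]; ring
    · simp only [r, Option.elim]
      have := congrArg (rescale (ζ ^ (j : ℕ))) hm
      simp only [map_add, map_pow, map_mul] at this
      rw [hx, hfix, ← hx] at this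
      rw [this]; ring)
  have hX : (X : PowerSeries K) ≠ 0 := X_ne_zero
  -- erased products
  have hj : ∀ j : Fin 23, X ^ 529 * ∏ i ∈ Finset.univ.erase (some j), r i =
      X ^ 528 * (C ((ζ ^ (j : ℕ))⁻¹) * rescale (ζ ^ (j : ℕ)) s) * x ^ 24 := by
    intro j
    have e1 := Finset.mul_prod_erase Finset.univ r (Finset.mem_univ (some j))
    rw [hv0, show r (some j) = rescale (ζ ^ (j : ℕ)) h from rfl] at e1
    have e2 : rescale (ζ ^ (j : ℕ)) h * rescale (ζ ^ (j : ℕ)) s = C (ζ ^ (j : ℕ)) * X := by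
      rw [← map_mul, hs, rescale_X]
    have e3 : C ((ζ ^ (j : ℕ))⁻¹) * C (ζ ^ (j : ℕ)) = (1 : PowerSeries K) := by
      rw [← map_mul, inv_mul_cancel₀ (pow_ne_zero _ hζ0), map_one]
    rw [← e1]
    calc _ = X ^ 529 * (C ((ζ ^ (j : ℕ))⁻¹) * C (ζ ^ (j : ℕ))) * ∏ i ∈ Finset.univ.erase (some j), r i := by
          rw [e3, mul_one]
      _ = X ^ 528 * C ((ζ ^ (j : ℕ))⁻¹) * (C (ζ ^ (j : ℕ)) * X) * 
            ∏ i ∈ Finset.univ.erase (some j), r i := by ring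
      _ = _ := by rw [← e2]; ring
  have hst : X ^ 529 * ∏ i ∈ Finset.univ.erase none, r i =
      expand 23 h23 (expand 23 h23 s) * x ^ 24 := by
    have e1 := Finset.mul_prod_erase Finset.univ r (Finset.mem_univ none)
    rw [hv0, show r none = expand 23 h23 x from rfl] at e1
    have e2 : expand 23 h23 x * expand 23 h23 (expand 23 h23 s) = X ^ 529 := by
      rw [hx, ← map_mul, ← map_mul, hs, expand_X, map_pow, expand_X, ← pow_mul]
    rw [← e1, ← e2]
    ring
  have hxu : x * expand 23 h23 s = X ^ 23 := by
    rw [hx, ← map_mul, hs, expand_X]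
  have hx0 : x ≠ 0 := by
    intro h0
    rw [h0, zero_mul] at hxu
    exact pow_ne_zero _ hX hxu.symm
  set Z := X ^ 528 * ∑ j : Fin 23, C ((ζ ^ (j : ℕ))⁻¹) * rescale (ζ ^ (j : ℕ)) s +
      expand 23 h23 (expand 23 h23 s) with hZ
  have key : X ^ 529 * x = Z * x ^ 24 := by
    conv_lhs => rw [← hv1]
    rw [Fintype.sum_option, mul_add, hst, Finset.mul_sum]
    simp only [hj]
    rw [← Finset.sum_mul, ← Finset.mul_sum, hZ]; ring
  have key2 : X ^ 529 = Z * x ^ 23 := by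
    apply mul_right_cancel₀ hx0
    rw [key]; ring
  have key3 : X ^ 529 * Z = X ^ 529 * (expand 23 h23 s) ^ 23 := by
    calc X ^ 529 * Z = Z * (X ^ 23) ^ 23 := by ring
      _ = Z * x ^ 23 * (expand 23 h23 s) ^ 23 := by rw [← hxu]; ring
      _ = _ := by rw [← key2]
  exact mul_left_cancel₀ (pow_ne_zero _ hX) key3

lemma key_identity (P : PowerSeries (ZMod 2)) (hP : pentagonalSeries (ZMod 2) * P = 1) (M : ℕ)
    (hM : 1 ≤ M) : coeff (23 * M - 22) P + coeff M (expand 23 (by norm_num) P) =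
      coeff M (P ^ 23) := by
  have h23 : (23 : ℕ) ≠ 0 := by norm_num
  have h24 : (24 : ℕ) ≠ 0 := by norm_num
  have : NeZero ((23 : ℕ) : ZMod 2) := ⟨by decide⟩
  obtain ⟨ζ, hζ⟩ := HasEnoughRootsOfUnity.exists_primitiveRoot (AlgebraicClosure (ZMod 2)) 23
  have : CharP (AlgebraicClosure (ZMod 2)) 2 := charP_of_injective_algebraMap
    (algebraMap (ZMod 2) (AlgebraicClosure (ZMod 2))).injective 2
  let φ := algebraMap (ZMod 2) (AlgebraicClosure (ZMod 2))
  have hφ : Function.Injective φ := φ.injective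
  let s := expand 24 h24 P
  have hs : eta * s = X := by
    simp only [s]
    rw [eta_eq, mul_assoc, ← map_mul, hP, map_one, mul_one]
  have he1 : coeff 1 eta = 1 := by
    rw [eta_eq, show (1 : ℕ) = 0 + 1 from rfl, coeff_succ_X_mul]
    have : pentagonal 0 = 0 := by simp [pentagonal]
    have h2 := coeff_pentagonalSeries_pentagonal (ZMod 2) 0
    rw [this] at h2
    simpa using h2
  have h := main_identity ζ hζ (map φ eta) (map φ s) (by rw [← map_mul, hs, map_X])
    (by rw [coeff_map, he1, map_one])
    (by
      rintro y rfl
      rw [← map_expand]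
      have := congrArg (map φ) (modular_eq _ rfl)
      simpa only [map_mul, map_pow, map_add] using this)
  have hc := congrArg (coeff (528 + 24 * (23 * M - 22))) h
  rw [map_add, coeff_X_pow_mul'] at hc
  rw [if_pos (by omega), Nat.add_sub_cancel_left, map_sum] at hc
  have hsum : ∀ j : Fin 23, coeff (24 * (23 * M - 22))
      (C ((ζ ^ (j : ℕ))⁻¹) * rescale (ζ ^ (j : ℕ)) (map φ s)) = φ (coeff (23 * M - 22) P) := by
    intro j
    rw [coeff_C_mul, coeff_rescale, coeff_map, coeff_expand_mul, ← mul_assoc]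
    have e1 : 24 * (23 * M - 22) = 23 * (24 * M - 23) + 1 := by omega
    have e2 : (ζ ^ (j : ℕ)) ^ (24 * (23 * M - 22)) = ζ ^ (j : ℕ) := by
      rw [e1, ← pow_mul, mul_comm (j : ℕ), pow_mul, pow_succ, pow_mul, hζ.pow_eq_one, one_pow, one_mul]
    rw [e2, inv_mul_cancel₀ (pow_ne_zero _ (hζ.ne_zero h23)), one_mul]
  simp only [hsum] at hc
  rw [Finset.sum_const, Finset.card_univ, Fintype.card_fin] at hc
  simp only [← map_expand, ← map_pow, coeff_map] at hc
  rw [← map_nsmul, ← map_add] at hc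
  have hc := hφ hc
  have e3 : (23 : ℕ) • coeff (23 * M - 22) P = coeff (23 * M - 22) P := by
    rw [nsmul_eq_mul, show ((23 : ℕ) : ZMod 2) = 1 from by decide, one_mul]
  have e4 : 528 + 24 * (23 * M - 22) = 24 * (23 * M) := by omega
  rw [e3, e4] at hc
  have e5 : ∀ f : PowerSeries (ZMod 2), expand 23 h23 (expand 24 h24 f) = expand 24 h24 (expand 23 h23 f) := by
    intro f
    rw [← expand_mul, ← expand_mul]
  simp only [s, e5, ← map_pow, coeff_expand_mul] at hc
  exact hc

end Reg23

namespace Reg23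
open PowerSeries

lemma FF_add {ι κ : Type*} {α : ι → ℕ} {β : κ → ℕ} (hα : FF α) (hβ : FF β) :
    FF (fun p : ι × κ => α p.1 + β p.2) := by
  intro n
  have hsub : {p : ι × κ | α p.1 + β p.2 = n} ⊆
      ⋃ b ∈ Finset.HasAntidiagonal.antidiagonal n, ({i | α i = b.1} ×ˢ {i | β i = b.2}) := by
    rintro ⟨i, j⟩ h
    simp only [Set.mem_ofPred_eq] at h
    simp only [Set.mem_iUnion]
    exact ⟨(α i, β j), by simpa using h, by simp⟩
  exact (Set.Finite.biUnion (Finset.finite_toSet _)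
    (fun b _ => (hα b.1).prod (hβ b.2))).subset hsub

lemma gf_equiv {ι κ : Type*} (e : κ ≃ ι) (α : ι → ℕ) : gf (fun i => α (e i)) = gf α := by
  ext n
  simp only [gf, coeff_mk]
  congr 1
  refine ncard_bij _ _ e e.symm ?_ ?_ ?_ ?_
  · intro x hx; exact hx
  · intro x hx; simpa using hx
  · simp
  · simp

lemma FF_equiv {ι κ : Type*} (e : κ ≃ ι) {α : ι → ℕ} (h : FF α) : FF (fun i => α (e i)) := by
  intro n
  exact (h n).preimage e.injective.injOn

/-- generating series of partitions modulo 2 -/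
noncomputable def P : PowerSeries (ZMod 2) := gf (fun x : Σ k : ℕ, k.Partition => x.1)

lemma fib (n : ℕ) : {x : Σ k : ℕ, k.Partition | x.1 = n} = Set.range (Sigma.mk n) := by
  ext ⟨k, x⟩
  simp only [Set.mem_ofPred_eq, Set.mem_range]
  constructor
  · rintro rfl; exact ⟨x, rfl⟩
  · rintro ⟨y, h⟩
    exact (congrArg Sigma.fst h).symm

lemma FF_P : FF (fun x : Σ k : ℕ, k.Partition => x.1) := by
  intro n
  rw [fib]
  exact Set.finite_range _

lemma P_eq : P = PowerSeries.mk fun n => (Finset.card (Nat.Partition.restricted n (fun _ => True)) : ZMod 2) := by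
  ext n
  simp only [P, gf, coeff_mk]
  congr 1
  rw [fib, ← Set.image_univ, Set.ncard_image_of_injective _ sigma_mk_injective, Set.ncard_univ,
    Nat.card_eq_fintype_card]
  simp [Nat.Partition.restricted]

lemma multi_aux (t : ℕ) : FF (fun f : Fin t → Σ k : ℕ, k.Partition => ∑ i, (f i).1) ∧
    gf (fun f : Fin t → Σ k : ℕ, k.Partition => ∑ i, (f i).1) = P ^ t := by
  induction t with
  | zero =>
    refine ⟨fun n => Set.toFinite _, ?_⟩
    ext n
    simp only [gf, coeff_mk, pow_zero, coeff_one, Finset.univ_eq_empty, Finset.sum_empty]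
    split_ifs with h
    · subst h; simp
    · simp [Ne.symm h]
  | succ t ih =>
    have e : (fun f : Fin (t + 1) → Σ k : ℕ, k.Partition => ∑ i, (f i).1) = 
      fun f => (fun p : (Σ k : ℕ, k.Partition) × (Fin t → Σ k : ℕ, k.Partition) =>
        p.1.1 + ∑ i, (p.2 i).1) ((Fin.consEquiv (fun _ => Σ k : ℕ, k.Partition)).symm f) := by
      ext f
      rw [Fin.sum_univ_succ]
      rfl
    rw [e]
    refine ⟨FF_equiv _ (FF_add FF_P ih.1), ?_⟩
    rw [gf_equiv (Fin.consEquiv (fun _ => Σ k : ℕ, k.Partition)).symm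
      (fun p : (Σ k : ℕ, k.Partition) × (Fin t → Σ k : ℕ, k.Partition) =>
        p.1.1 + ∑ i, (p.2 i).1), ← gf_mul _ _ FF_P ih.1, ih.2, pow_succ']
    rfl

lemma multi_coeff (t n : ℕ) : ((numMultipartitions t n : ℕ) : ZMod 2) = coeff n (P ^ t) := by
  rw [← (multi_aux t).2]
  simp only [gf, coeff_mk]
  rfl

section products
open PowerSeries.WithPiTopology Nat.Partition

lemma pent_mul_P : pentagonalSeries (ZMod 2) * P = 1 := by
  let _ : TopologicalSpace (ZMod 2) := ⊥
  have _ : DiscreteTopology (ZMod 2) := ⟨rfl⟩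
  rw [P_eq, powerSeriesMk_card_restricted_eq_tprod, ← tprod_one_sub_X_pow, mul_comm,
    ← (multipliable_powerSeriesMk_card_restricted (ZMod 2) (fun _ => True)).tprod_mul
      (multipliable_one_sub_X_pow _)]
  simp_rw [if_true, pow_mul]
  conv in fun b ↦ _ =>
    ext b
    rw [tsum_pow_mul_one_sub_of_constantCoeff_eq_zero (by simp)]
  simp

lemma expand_pent (m : ℕ) (hm : m ≠ 0) [TopologicalSpace (ZMod 2)] [DiscreteTopology (ZMod 2)] :
    HasProd (fun n ↦ (1 - X ^ ((n + 1) * m) : PowerSeries (ZMod 2)))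
      (expand m hm (pentagonalSeries (ZMod 2))) := by
  have hc : Continuous (expand m hm : PowerSeries (ZMod 2) →ₐ[ZMod 2] PowerSeries (ZMod 2)) := by
    rw [continuous_iff_continuousAt]
    intro f
    unfold ContinuousAt
    rw [tendsto_iff_coeff_tendsto]
    intro n
    simp only [coeff_expand]
    split_ifs
    · exact (continuous_coeff (ZMod 2) (n / m)).continuousAt
    · exact tendsto_const_nhds
  have := (hasProd_one_sub_X_pow (ZMod 2)).map (expand m hm) hc
  convert! this using 1
  ext1 n
  simp only [Function.comp, map_sub, map_one, map_pow, expand_X]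
  rw [← pow_mul, mul_comm]

lemma reg_mul (m : ℕ) (hm : m ≠ 0) :
    (PowerSeries.mk fun n => ((numRegularPartitions m n : ℕ) : ZMod 2)) =
      expand m hm (pentagonalSeries (ZMod 2)) * P := by
  let _ : TopologicalSpace (ZMod 2) := ⊥
  have _ : DiscreteTopology (ZMod 2) := ⟨rfl⟩
  have h1 : (PowerSeries.mk fun n => ((numRegularPartitions m n : ℕ) : ZMod 2)) =
      PowerSeries.mk fun n => (Finset.card (restricted n (¬ m ∣ ·)) : ZMod 2) := by
    ext n
    simp only [coeff_mk]
    congr 1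
    unfold numRegularPartitions
    exact Nat.subtype_card _ (by intro x; simp [restricted])
  have h2 : (PowerSeries.mk fun n => (Finset.card (restricted n (¬ m ∣ ·)) : ZMod 2)) *
      pentagonalSeries (ZMod 2) = expand m hm (pentagonalSeries (ZMod 2)) := by
    rw [← (expand_pent m hm).tprod_eq, powerSeriesMk_card_restricted_eq_tprod,
      ← tprod_one_sub_X_pow, ← (multipliable_powerSeriesMk_card_restricted (ZMod 2) (¬ m ∣ ·)).tprod_mul
    (multipliable_one_sub_X_pow _)]
    simp_rw [ite_not, ite_mul, pow_mul]
    conv in fun b ↦ _ =>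
      ext b
      rw [tsum_pow_mul_one_sub_of_constantCoeff_eq_zero (by simp)]
    have hm' : 0 < m := by omega
    refine tprod_eq_tprod_of_ne_one_bij (fun i ↦ (i.val + 1) * m - 1) ?_ ?_ ?_
    · intro a b h
      have h1 : 0 < (a.val + 1) * m := by positivity
      have h2 : 0 < (b.val + 1) * m := by positivity
      have h3 : (a.val + 1) * m = (b.val + 1) * m := by simp only at h; omega
      have h4 := Nat.eq_of_mul_eq_mul_right hm' h3
      exact SetCoe.ext (by omega)
    · suffices ∀ (i : ℕ), m ∣ i + 1 → ∃ j ≠ 0, j * m - 1 = i by simpa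
      intro i hi
      obtain ⟨j, hj⟩ := dvd_def.mp hi
      refine ⟨j, by grind, Nat.sub_eq_of_eq_add ?_⟩
      rw [hj, mul_comm m j]
    · intro i
      have : (i + 1) * m - 1 + 1 = (i + 1) * m := by
        have : 0 < (i.val + 1) * m := by positivity
        omega
      simp [this, pow_mul]
  rw [h1, ← h2, mul_assoc, pent_mul_P, mul_one]

end products

lemma section_coeff (G Q : PowerSeries (ZMod 2)) (N : ℕ) :
    coeff (23 * N + 1) (expand 23 (by norm_num) G * Q) =
      coeff N (G * PowerSeries.mk fun j => coeff (23 * j + 1) Q) := by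
  rw [coeff_mul, coeff_mul]
  symm
  refine Finset.sum_of_injOn (fun p => (23 * p.1, 23 * p.2 + 1)) ?_ ?_ ?_ ?_
  · rintro ⟨a, b⟩ _ ⟨c, d⟩ _ h
    simp only [Prod.mk.injEq] at h ⊢
    omega
  · rintro ⟨a, b⟩ h
    simp only [Finset.mem_coe, Finset.HasAntidiagonal.mem_antidiagonal] at h ⊢
    omega
  · rintro ⟨a, b⟩ h h'
    simp only [Finset.HasAntidiagonal.mem_antidiagonal] at h
    by_cases ha : 23 ∣ a
    · obtain ⟨c, rfl⟩ := ha
      exfalso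
      apply h'
      refine ⟨(c, N - c), ?_, ?_⟩
      · simp only [Finset.mem_coe, Finset.HasAntidiagonal.mem_antidiagonal]; omega
      · simp only [Prod.mk.injEq]
        exact ⟨trivial, by omega⟩
    · simp only
      rw [coeff_expand_of_not_dvd _ _ _ ha, zero_mul]
  · rintro ⟨a, b⟩ _
    simp

lemma series_key : X * (PowerSeries.mk fun j => coeff (23 * j + 1) P) =
    P ^ 23 + expand 23 (by norm_num) P := by
  ext M
  rcases M with _ | M
  · have : ∀ c : ZMod 2, c ^ 23 + c = 0 := by decide
    simp [this]
  · rw [coeff_succ_X_mul, coeff_mk, map_add, ← key_identity P pent_mul_P (M + 1) (by omega)]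
    rw [show 23 * (M + 1) - 22 = 23 * M + 1 by omega, add_assoc, CharTwo.add_self_eq_zero, add_zero]

lemma pow_two_pow (f : PowerSeries (ZMod 2)) (k : ℕ) :
    f ^ (2 ^ k) = expand (2 ^ k) (by positivity) f := by
  induction k with
  | zero => simp
  | succ k ih =>
    have h : expand (2 ^ (k + 1)) (by positivity) f =
      expand (2 * 2 ^ k) (by positivity) f := by
        congr 2; ring
    rw [h, show f ^ 2 ^ (k + 1) = (f ^ 2 ^ k) ^ 2 by rw [← pow_mul, pow_succ], ih, sq_eq, expand_mul _ two_ne_zero _ (by positivity)]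

lemma main (k t B n : ℕ) (hkt : 2 ^ k + t = 23) (hB : 1 ≤ B)
    (hres : ∀ j : ZMod 23, 2 ^ k * (j * (3 * j - 1)) ≠ 2 * (B : ZMod 23)) :
    numRegularPartitions (23 * 2 ^ k) (529 * n + 23 * B - 22) ≡
        numMultipartitions t (23 * n + B) [MOD 2] := by
  rw [← ZMod.natCast_eq_natCast_iff, multi_coeff]
  have h1 := congrArg (coeff (529 * n + 23 * B - 22)) (reg_mul (23 * 2 ^ k) (by positivity))
  rw [coeff_mk] at h1
  rw [h1, expand_mul 23 (by norm_num) _ (by positivity),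
    show 529 * n + 23 * B - 22 = 23 * (23 * n + B - 1) + 1 by omega, section_coeff,
    ← coeff_succ_X_mul, mul_left_comm, series_key, mul_add, map_add,
    show 23 * n + B - 1 + 1 = 23 * n + B by omega]
  have h2 : expand (2 ^ k) (by positivity) (pentagonalSeries (ZMod 2)) * P ^ 23 = P ^ t := by
    rw [← hkt, pow_add, ← mul_assoc, ← pow_two_pow, ← mul_pow, pent_mul_P, one_pow, one_mul]
  rw [h2]
  suffices h : coeff (23 * n + B) (expand (2 ^ k) (by positivity) (pentagonalSeries (ZMod 2)) *
      expand 23 (by norm_num) P) = 0 by rw [h, add_zero]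
  rw [coeff_mul]
  apply Finset.sum_eq_zero
  rintro ⟨a, b⟩ h
  simp only [Finset.HasAntidiagonal.mem_antidiagonal] at h
  simp only
  by_cases hb : 23 ∣ b
  swap
  · rw [coeff_expand_of_not_dvd _ _ _ hb, mul_zero]
  by_cases ha : 2 ^ k ∣ a
  swap
  · rw [coeff_expand_of_not_dvd _ _ _ ha, zero_mul]
  obtain ⟨c, rfl⟩ := ha
  obtain ⟨d, rfl⟩ := hb
  rw [coeff_expand_mul, coeff_pentagonalSeries_eq_zero, zero_mul]
  rintro ⟨j, rfl⟩
  apply hres j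
  have e1 := congrArg (fun z : ℤ => (z : ZMod 23)) (two_mul_natCast_pentagonal j)
  have e2 := congrArg (fun z : ℕ => (z : ZMod 23)) h
  push_cast at e1 e2
  rw [show (23 : ZMod 23) = 0 from rfl] at e2
  rw [← e1]
  linear_combination 2 * e2

end Reg23
theorem stmt_6 (n : ℕ) :
    (∀ B ∈ ({3, 5, 8, 9, 12, 13, 15, 17, 18, 19, 20} : Finset ℕ),
      numRegularPartitions 46 (529 * n + 23 * B - 22) ≡
        numMultipartitions 21 (23 * n + B) [MOD 2]) ∧
    (∀ B ∈ ({1, 3, 6, 7, 10, 11, 13, 15, 16, 17, 18} : Finset ℕ),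
      numRegularPartitions 92 (529 * n + 23 * B - 22) ≡
        numMultipartitions 19 (23 * n + B) [MOD 2]) ∧
    (∀ B ∈ ({2, 3, 6, 7, 9, 11, 12, 13, 14, 20, 22} : Finset ℕ),
      numRegularPartitions 184 (529 * n + 23 * B - 22) ≡
        numMultipartitions 15 (23 * n + B) [MOD 2]) ∧
    (∀ B ∈ ({1, 3, 4, 5, 6, 12, 14, 17, 18, 21, 22} : Finset ℕ),
      numRegularPartitions 368 (529 * n + 23 * B - 22) ≡
        numMultipartitions 7 (23 * n + B) [MOD 2]) := by
  refine ⟨?_, ?_, ?_, ?_⟩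
  · intro B hB
    refine Reg23.main 1 21 B n (by norm_num) ?_ ?_ <;>
    · revert B; decide
  · intro B hB
    refine Reg23.main 2 19 B n (by norm_num) ?_ ?_ <;>
    · revert B; decide
  · intro B hB
    refine Reg23.main 3 15 B n (by norm_num) ?_ ?_ <;>
    · revert B; decide
  · intro B hB
    refine Reg23.main 4 7 B n (by norm_num) ?_ ?_ <;>
    · revert B; decide
end
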